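/- Let u : B_1^+ ∪ B_1^0 → ℝ be continuous, a-harmonic in B_1^+, and satisfy ∫_{B_1^+} y^a u(x,y)² dx dy < ∞, and suppose that f(x) := u(x,0) is C^{1,1} on B_1^0. Then there exist a number D ∈ ℝ and a constant C > 0, with C and |D| bounded in terms of n, a, ‖f‖_{C^{1,1}(B_1^0)} and (∫_{B_1^+} y^a u²)^{1/2} only, such that for all (x,y) ∈ B_{1/2}^+: |u(x,y) − f(0) − ∇f(0)·x − D y^{1−a}| ≤ C (|x|² + y² + |x| y^{1−a}). -/

import Mathlib

open Set Filter Topology MeasureTheory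
open scoped RealInnerProductSpace

noncomputable section

abbrev En (n : ℕ) := EuclideanSpace ℝ (Fin n)

/-- The open upper half ball `B_r^+`. -/
def halfBall (n : ℕ) (r : ℝ) : Set (En n × ℝ) :=
  {p | ‖p.1‖ ^ 2 + p.2 ^ 2 < r ^ 2 ∧ 0 < p.2}

/-- The closure of the upper half ball. -/
def closedHalfBall (n : ℕ) (r : ℝ) : Set (En n × ℝ) :=
  {p | ‖p.1‖ ^ 2 + p.2 ^ 2 ≤ r ^ 2 ∧ 0 ≤ p.2}

/-- `B_r^+ ∪ B_r^0`. -/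
def halfBallWithBase (n : ℕ) (r : ℝ) : Set (En n × ℝ) :=
  {p | ‖p.1‖ ^ 2 + p.2 ^ 2 < r ^ 2 ∧ 0 ≤ p.2}

/-- The flat ball `B_r^0` in `ℝⁿ`. -/
def flatBall (n : ℕ) (r : ℝ) : Set (En n) := {x | ‖x‖ < r}

/-- `(∂B_1)^+`. -/
def spherePlus (n : ℕ) : Set (En n × ℝ) := {p | ‖p.1‖ ^ 2 + p.2 ^ 2 = 1 ∧ 0 < p.2}

/-- closure of `(∂B_1)^+`. -/
def closedSpherePlus (n : ℕ) : Set (En n × ℝ) := {p | ‖p.1‖ ^ 2 + p.2 ^ 2 = 1 ∧ 0 ≤ p.2}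

/-- Second directional derivative of `u` at `p` in direction `v`. -/
def D2 {n : ℕ} (u : En n × ℝ → ℝ) (p v : En n × ℝ) : ℝ :=
  fderiv ℝ (fun q => fderiv ℝ u q v) p v

/-- The Laplacian in the `n+1` variables `(x, y)`. -/
def lap {n : ℕ} (u : En n × ℝ → ℝ) (p : En n × ℝ) : ℝ :=
  (∑ i : Fin n, D2 u p (EuclideanSpace.single i 1, 0)) + D2 u p (0, 1)

/-- `u` is `a`-harmonic on `Ω`: it is `C²` there and `Δu + (a/y) ∂_y u = 0`. -/
def IsAHarmonicOn {n : ℕ} (a : ℝ) (u : En n × ℝ → ℝ) (Ω : Set (En n × ℝ)) : Prop :=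
  ContDiffOn ℝ 2 u Ω ∧ ∀ p ∈ Ω, lap u p + (a / p.2) * fderiv ℝ u p (0, 1) = 0

/-- `lim_{y → 0⁺} y^a ∂_y w(x, y) = L`. -/
def NormalDerivLimit {n : ℕ} (a : ℝ) (w : En n × ℝ → ℝ) (x : En n) (L : ℝ) : Prop :=
  Tendsto (fun y : ℝ => y ^ a * fderiv ℝ w (x, y) (0, 1)) (𝓝[>] (0 : ℝ)) (𝓝 L)

/-- The boundary-restriction `(t, x) ↦ u(t, x, 0)`. -/
def bdryFun {n : ℕ} (u : ℝ → En n × ℝ → ℝ) : ℝ × En n → ℝ := fun q => u q.1 (q.2, 0)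

/-- A classical solution of the extended drift–diffusion equation on
`[-1,0] × closure (B_1^+)` with drift `b` and right-hand side `f`. -/
def IsExtDDSolution {n : ℕ} (a : ℝ) (b : ℝ → En n → En n) (f : ℝ → En n → ℝ)
    (u : ℝ → En n × ℝ → ℝ) : Prop :=
  ContinuousOn (fun q : ℝ × (En n × ℝ) => u q.1 q.2) (Icc (-1 : ℝ) 0 ×ˢ closedHalfBall n 1) ∧
  (∀ t ∈ Icc (-1 : ℝ) 0, IsAHarmonicOn a (u t) (halfBall n 1)) ∧
  (∀ q ∈ Ioc (-1 : ℝ) 0 ×ˢ flatBall n 1,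
      DifferentiableWithinAt ℝ (bdryFun u) (Ioc (-1 : ℝ) 0 ×ˢ flatBall n 1) q) ∧
  (∀ t x, (t, x) ∈ Ioc (-1 : ℝ) 0 ×ˢ flatBall n 1 →
      ∃ L : ℝ, NormalDerivLimit a (u t) x L ∧
        fderivWithin ℝ (bdryFun u) (Ioc (-1 : ℝ) 0 ×ˢ flatBall n 1) (t, x) (1, 0) +
          fderivWithin ℝ (bdryFun u) (Ioc (-1 : ℝ) 0 ×ˢ flatBall n 1) (t, x) (0, b t x) -
          L = f t x)

/-- A classical solution of the localized fractional heat equation on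
`[-1,0] × closure (B_1^+)`. -/
def IsFracHeatSolution {n : ℕ} (a : ℝ) (u : ℝ → En n × ℝ → ℝ) : Prop :=
  ContinuousOn (fun q : ℝ × (En n × ℝ) => u q.1 q.2) (Icc (-1 : ℝ) 0 ×ˢ closedHalfBall n 1) ∧
  (∀ t ∈ Icc (-1 : ℝ) 0, IsAHarmonicOn a (u t) (halfBall n 1)) ∧
  (∀ t ∈ Ioc (-1 : ℝ) 0, ∀ x ∈ flatBall n 1,
      DifferentiableWithinAt ℝ (fun τ => u τ (x, 0)) (Ioc (-1 : ℝ) 0) t ∧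
      NormalDerivLimit a (u t) x (derivWithin (fun τ => u τ (x, 0)) (Ioc (-1 : ℝ) 0) t))

/-!
The trace is `C^{1,1}`, so tangential first and second differences of `u` are bounded on the base.
Bernstein's method, with `u²` replaced by its average over the segment along which a difference is
taken, carries these bounds into the interior without differentiating the equation. The tangential
part of `Δu + (a/y) ∂_y u = 0` is then bounded, so each vertical line satisfies an ordinary
differential equation `(y^a u_y)' = O(y^a)`, whose solutions expand as
`u(x, 0) + D y^{1-a} + O(y²)`. To compare lines over different base points, an explicit barrier,
`|X|` plus a multiple of `ρ^a y^{1-a} - y`, bounds the growth of the tangential differences and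
produces the mixed term `|x| y^{1-a}`. The sup bound of `u` in the interior comes from looking at a
maximum point of `(9/10 - |X|)^{n+2} |u|`: near it `u` oscillates little, so a large value there
forces a large weighted energy.
-/

/-! ### Second derivatives in one variable -/

/-- `g` is differentiable near `x`, with first derivative `d₁` and second derivative `d₂` at `x`.
Carrying both values along makes the product and chain rules usable without computing `deriv`s. -/
def HasDeriv2At (g : ℝ → ℝ) (d₁ d₂ x : ℝ) : Prop :=
  ∃ g' : ℝ → ℝ, (∀ᶠ t in 𝓝 x, HasDerivAt g (g' t) t) ∧ g' x = d₁ ∧ HasDerivAt g' d₂ x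

namespace HasDeriv2At

variable {f g : ℝ → ℝ} {d₁ d₂ e₁ e₂ x : ℝ}

lemma congr_deriv (h : HasDeriv2At g d₁ d₂ x) (h₁ : d₁ = e₁) (h₂ : d₂ = e₂) :
    HasDeriv2At g e₁ e₂ x := by
  rwa [← h₁, ← h₂]

lemma hasDerivAt (h : HasDeriv2At g d₁ d₂ x) : HasDerivAt g d₁ x := by
  obtain ⟨g', hg, rfl, -⟩ := h
  exact hg.self_of_nhds

lemma unique (h : HasDeriv2At g d₁ d₂ x) (h' : HasDeriv2At g e₁ e₂ x) : d₁ = e₁ ∧ d₂ = e₂ := by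
  refine ⟨h.hasDerivAt.unique h'.hasDerivAt, ?_⟩
  obtain ⟨g', hg, -, hg'⟩ := h
  obtain ⟨k', hk, -, hk'⟩ := h'
  have hgk : g' =ᶠ[𝓝 x] k' := by
    filter_upwards [hg, hk] with t hgt hkt using hgt.unique hkt
  exact hg'.unique (hk'.congr_of_eventuallyEq hgk)

lemma const (c : ℝ) : HasDeriv2At (fun _ => c) 0 0 x :=
  ⟨fun _ => 0, Eventually.of_forall fun t => hasDerivAt_const t c, rfl, hasDerivAt_const x 0⟩

lemma id : HasDeriv2At (fun t => t) 1 0 x :=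
  ⟨fun _ => 1, Eventually.of_forall hasDerivAt_id, rfl, hasDerivAt_const x 1⟩

lemma add (hf : HasDeriv2At f d₁ d₂ x) (hg : HasDeriv2At g e₁ e₂ x) :
    HasDeriv2At (fun t => f t + g t) (d₁ + e₁) (d₂ + e₂) x := by
  obtain ⟨f', hf, rfl, hf'⟩ := hf
  obtain ⟨g', hg, rfl, hg'⟩ := hg
  refine ⟨fun t => f' t + g' t, ?_, rfl, hf'.add hg'⟩
  filter_upwards [hf, hg] with t hft hgt using hft.add hgt

lemma mul (hf : HasDeriv2At f d₁ d₂ x) (hg : HasDeriv2At g e₁ e₂ x) :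
    HasDeriv2At (fun t => f t * g t) (d₁ * g x + f x * e₁)
      (d₂ * g x + 2 * d₁ * e₁ + f x * e₂) x := by
  obtain ⟨f', hf, rfl, hf'⟩ := hf
  obtain ⟨g', hg, rfl, hg'⟩ := hg
  refine ⟨fun t => f' t * g t + f t * g' t, ?_, rfl, ?_⟩
  · filter_upwards [hf, hg] with t hft hgt using hft.mul hgt
  · exact ((hf'.mul hg.self_of_nhds).add (hf.self_of_nhds.mul hg')).congr_deriv (by ring)

lemma const_mul (c : ℝ) (hg : HasDeriv2At g e₁ e₂ x) :
    HasDeriv2At (fun t => c * g t) (c * e₁) (c * e₂) x :=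
  ((const c).mul hg).congr_deriv (by ring) (by ring)

lemma comp (hf : HasDeriv2At f d₁ d₂ (g x)) (hg : HasDeriv2At g e₁ e₂ x) :
    HasDeriv2At (fun t => f (g t)) (d₁ * e₁) (d₂ * e₁ ^ 2 + d₁ * e₂) x := by
  obtain ⟨f', hf, rfl, hf'⟩ := hf
  obtain ⟨g', hg, rfl, hg'⟩ := hg
  have hgx : HasDerivAt g (g' x) x := hg.self_of_nhds
  refine ⟨fun t => f' (g t) * g' t, ?_, rfl, ?_⟩
  · filter_upwards [hg, hgx.continuousAt.eventually hf] with t hgt hft using hft.comp t hgt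
  · exact ((hf'.comp x hgx).mul hg').congr_deriv (by simp only [Function.comp_apply]; ring)

lemma rpow_const (p : ℝ) (hx : 0 < x) :
    HasDeriv2At (fun t => t ^ p) (p * x ^ (p - 1)) (p * ((p - 1) * x ^ (p - 2))) x := by
  refine ⟨fun t => p * t ^ (p - 1), ?_, rfl, ?_⟩
  · filter_upwards [lt_mem_nhds hx] with t ht
    exact Real.hasDerivAt_rpow_const (Or.inl ht.ne')
  · have h := (Real.hasDerivAt_rpow_const (p := p - 1) (Or.inl hx.ne')).const_mul p
    rwa [sub_sub, one_add_one_eq_two] at h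

lemma quadratic (c₀ c₁ c₂ : ℝ) :
    HasDeriv2At (fun t => c₀ + c₁ * t + c₂ * t ^ 2) c₁ (2 * c₂) 0 := by
  simp only [sq]
  exact (((const c₀).add (id.const_mul c₁)).add ((id.mul id).const_mul c₂)).congr_deriv
    (by ring) (by ring)

lemma abs_le {Q : ℝ} (h : HasDeriv2At g d₁ d₂ x) (hQ : 0 ≤ Q)
    (hdiff : ∀ᶠ q : ℝ × ℝ in 𝓝 0,
      |g (x + q.1 + q.2) - g (x + q.1) - (g (x + q.2) - g x)| ≤ Q * |q.1| * |q.2|) :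
    |d₂| ≤ Q := by
  obtain ⟨g', hg, -, hg'⟩ := h
  have hshift : Tendsto (fun s => x + s) (𝓝 0) (𝓝 x) := by
    simpa using (continuous_const_add x).tendsto 0
  have hg₀ (y : ℝ) (hy : HasDerivAt g (g' y) y) : HasDerivAt (fun t => g (y + t)) (g' y) 0 := by
    refine HasDerivAt.comp_const_add y 0 ?_
    rwa [add_zero]
  have hlip : ∀ᶠ s in 𝓝 0, |g' (x + s) - g' x| ≤ Q * |s| := by
    filter_upwards [hshift.eventually hg, hdiff.curry_nhds] with s hs hst
    refine ((hg₀ _ hs).sub (hg₀ _ hg.self_of_nhds)).le_of_lip' (by positivity) ?_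
    filter_upwards [hst] with t ht
    simpa [sub_sub_sub_comm, Real.norm_eq_abs] using ht
  have hg₁ : HasDerivAt (fun s => g' (x + s)) d₂ 0 :=
    HasDerivAt.comp_const_add x 0 (by rwa [add_zero])
  refine hg₁.le_of_lip' hQ ?_
  simpa using hlip

lemma deriv_eq_zero_and_nonpos_of_isLocalMax (h : HasDeriv2At g d₁ d₂ x) (hm : IsLocalMax g x) :
    d₁ = 0 ∧ d₂ ≤ 0 := by
  have hd₁ : d₁ = 0 := hm.hasDerivAt_eq_zero h.hasDerivAt
  refine ⟨hd₁, not_lt.1 fun hd₂ => ?_⟩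
  have hcont : ContinuousAt g x := h.hasDerivAt.continuousAt
  obtain ⟨g', hg, hg'x, hg'⟩ := h
  have hderiv : deriv g =ᶠ[𝓝 x] g' := by
    filter_upwards [hg] with t ht using ht.deriv
  have hmin : IsLocalMin g x := by
    apply isLocalMin_of_deriv_deriv_pos
    · rwa [hderiv.deriv_eq, hg'.deriv]
    · rw [hderiv.self_of_nhds, hg'x, hd₁]
    · exact hcont
  have hconst : g =ᶠ[𝓝 x] fun _ => g x := by
    filter_upwards [hm, hmin] with t hle hge using le_antisymm hle hge
  have hg'0 : g' =ᶠ[𝓝 x] fun _ => 0 := by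
    filter_upwards [hconst.eventuallyEq_nhds, hg] with t ht hgt
    rw [← hgt.deriv, ht.deriv_eq, deriv_const]
  exact hd₂.ne' (hg'.unique ((hasDerivAt_const x 0).congr_of_eventuallyEq hg'0))

end HasDeriv2At

/-! ### Parametric integrals -/

lemma hasDerivAt_intervalIntegral_of_continuousOn {F F' : ℝ → ℝ → ℝ} {s : Set ℝ} {x α β : ℝ}
    (hs : IsCompact s) (hx : x ∈ interior s)
    (hF : ContinuousOn (fun q : ℝ × ℝ => F q.1 q.2) (s ×ˢ uIcc α β))
    (hF' : ContinuousOn (fun q : ℝ × ℝ => F' q.1 q.2) (s ×ˢ uIcc α β))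
    (hd : ∀ t ∈ interior s, ∀ τ ∈ uIcc α β, HasDerivAt (fun t => F t τ) (F' t τ) t) :
    HasDerivAt (fun t => ∫ τ in α..β, F t τ) (∫ τ in α..β, F' x τ) x := by
  obtain ⟨C, hC⟩ := (hs.prod isCompact_uIcc).exists_bound_of_continuousOn hF'
  have slice {G : ℝ → ℝ → ℝ} (hG : ContinuousOn (fun q : ℝ × ℝ => G q.1 q.2) (s ×ˢ uIcc α β))
      {t : ℝ} (ht : t ∈ interior s) : ContinuousOn (G t) (uIcc α β) :=
    hG.comp (f := fun τ : ℝ => (t, τ)) (by fun_prop) fun τ hτ => ⟨interior_subset ht, hτ⟩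
  have measurable_slice {g : ℝ → ℝ} (hg : ContinuousOn g (uIcc α β)) :
      AEStronglyMeasurable g (volume.restrict (uIoc α β)) :=
    (hg.mono uIoc_subset_uIcc).aestronglyMeasurable measurableSet_uIoc
  have hnhds : interior s ∈ 𝓝 x := isOpen_interior.mem_nhds hx
  refine (intervalIntegral.hasDerivAt_integral_of_dominated_loc_of_deriv_le
    (bound := fun _ => C) hnhds ?_ (slice hF hx).intervalIntegrable
    (measurable_slice (slice hF' hx)) ?_ intervalIntegrable_const ?_).2
  · filter_upwards [hnhds] with t ht using measurable_slice (slice hF ht)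
  · exact Eventually.of_forall fun τ hτ t ht =>
      hC (t, τ) ⟨interior_subset ht, uIoc_subset_uIcc hτ⟩
  · exact Eventually.of_forall fun τ hτ t ht => hd t ht τ (uIoc_subset_uIcc hτ)

lemma HasDeriv2At.intervalIntegral {F F₁ F₂ : ℝ → ℝ → ℝ} {s : Set ℝ} {x α β : ℝ}
    (hs : IsCompact s) (hx : s ∈ 𝓝 x)
    (hF : ContinuousOn (fun q : ℝ × ℝ => F q.1 q.2) (s ×ˢ uIcc α β))
    (hF₁ : ContinuousOn (fun q : ℝ × ℝ => F₁ q.1 q.2) (s ×ˢ uIcc α β))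
    (hF₂ : ContinuousOn (fun q : ℝ × ℝ => F₂ q.1 q.2) (s ×ˢ uIcc α β))
    (hd : ∀ t ∈ interior s, ∀ τ ∈ uIcc α β, HasDerivAt (fun t => F t τ) (F₁ t τ) t)
    (hd₁ : ∀ t ∈ interior s, ∀ τ ∈ uIcc α β, HasDerivAt (fun t => F₁ t τ) (F₂ t τ) t) :
    HasDeriv2At (fun t => ∫ τ in α..β, F t τ) (∫ τ in α..β, F₁ x τ) (∫ τ in α..β, F₂ x τ) x := by
  have hx : x ∈ interior s := mem_interior_iff_mem_nhds.2 hx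
  refine ⟨fun t => ∫ τ in α..β, F₁ t τ, ?_, rfl,
    hasDerivAt_intervalIntegral_of_continuousOn hs hx hF₁ hF₂ hd₁⟩
  filter_upwards [isOpen_interior.mem_nhds hx] with t ht using
    hasDerivAt_intervalIntegral_of_continuousOn hs ht hF hF₁ hd

lemma sq_intervalIntegral_le {g : ℝ → ℝ} (hg : ContinuousOn g (Icc 0 1)) :
    (∫ τ in (0 : ℝ)..1, g τ) ^ 2 ≤ ∫ τ in (0 : ℝ)..1, g τ ^ 2 := by
  have hgi : IntegrableOn g (Ioc 0 1) := hg.integrableOn_Icc.mono_set Ioc_subset_Icc_self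
  have hgi2 : IntegrableOn (fun τ => g τ ^ 2) (Ioc 0 1) :=
    (hg.pow 2).integrableOn_Icc.mono_set Ioc_subset_Icc_self
  have : IsProbabilityMeasure (volume.restrict (Ioc (0 : ℝ) 1)) := ⟨by simp⟩
  simp only [intervalIntegral.integral_of_le zero_le_one]
  exact (even_two.convexOn_pow (𝕜 := ℝ)).map_integral_le (by fun_prop) isClosed_univ
    (by simp) hgi hgi2

/-! ### The Euclidean half space -/

variable {n : ℕ}

/-- The coordinate directions of the half space; `none` stands for the normal variable `y`. -/
def coordDir : Option (Fin n) → En n × ℝ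
  | none => (0, 1)
  | some i => (EuclideanSpace.single i 1, 0)

/-- The coordinates of a point, indexed like `coordDir`. -/
def coord : Option (Fin n) → En n × ℝ → ℝ
  | none, X => X.2
  | some i, X => X.1 i

/-- The Euclidean norm `√(|x|² + y²)`; the norm of the product type `En n × ℝ` is
`max |x| |y|` instead. -/
def euclNorm (X : En n × ℝ) : ℝ := ‖WithLp.toLp 2 X‖

lemma euclNorm_sq (X : En n × ℝ) : euclNorm X ^ 2 = ‖X.1‖ ^ 2 + X.2 ^ 2 := by
  rw [euclNorm, WithLp.prod_norm_sq_eq_of_L2, Real.norm_eq_abs, sq_abs]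
  rfl

lemma euclNorm_nonneg (X : En n × ℝ) : 0 ≤ euclNorm X := norm_nonneg _

lemma euclNorm_add_le (X Y : En n × ℝ) : euclNorm (X + Y) ≤ euclNorm X + euclNorm Y :=
  norm_add_le _ _

lemma euclNorm_smul (t : ℝ) (X : En n × ℝ) : euclNorm (t • X) = |t| * euclNorm X := by
  rw [euclNorm, WithLp.toLp_smul, norm_smul, Real.norm_eq_abs, euclNorm]

@[simp]
lemma euclNorm_zero : euclNorm (0 : En n × ℝ) = 0 := norm_zero

@[simp]
lemma euclNorm_tangential (h : En n) : euclNorm ((h, 0) : En n × ℝ) = ‖h‖ := by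
  rw [← sq_eq_sq₀ (euclNorm_nonneg _) (norm_nonneg _), euclNorm_sq]
  simp

@[simp]
lemma euclNorm_normal (t : ℝ) : euclNorm ((0, t) : En n × ℝ) = |t| := by
  rw [← sq_eq_sq₀ (euclNorm_nonneg _) (abs_nonneg _), euclNorm_sq]
  simp

@[simp]
lemma euclNorm_coordDir (o : Option (Fin n)) : euclNorm (coordDir o) = 1 := by
  cases o <;> simp [coordDir]

lemma norm_fst_le_euclNorm (X : En n × ℝ) : ‖X.1‖ ≤ euclNorm X :=
  le_of_sq_le_sq (by rw [euclNorm_sq]; linarith [sq_nonneg X.2]) (euclNorm_nonneg X)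

lemma abs_snd_le_euclNorm (X : En n × ℝ) : |X.2| ≤ euclNorm X :=
  abs_le_of_sq_le_sq (by rw [euclNorm_sq]; linarith [sq_nonneg ‖X.1‖]) (euclNorm_nonneg X)

lemma norm_le_euclNorm (X : En n × ℝ) : ‖X‖ ≤ euclNorm X :=
  max_le (norm_fst_le_euclNorm X) (abs_snd_le_euclNorm X)

@[fun_prop]
lemma continuous_euclNorm : Continuous (euclNorm : En n × ℝ → ℝ) := by
  unfold euclNorm
  fun_prop

lemma euclNorm_sq_eq_sum (X : En n × ℝ) : euclNorm X ^ 2 = ∑ o, coord o X ^ 2 := by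
  rw [euclNorm_sq, Fintype.sum_option, EuclideanSpace.norm_sq_eq, add_comm]
  simp [coord]

lemma euclNorm_add_smul_coordDir_sq (X : En n × ℝ) (o : Option (Fin n)) (t : ℝ) :
    euclNorm (X + t • coordDir o) ^ 2 = euclNorm X ^ 2 + 2 * coord o X * t + 1 * t ^ 2 := by
  cases o with
  | none => simp [euclNorm_sq, coordDir, coord]; ring
  | some i =>
    simp only [euclNorm_sq, coordDir, coord, Prod.fst_add, Prod.snd_add, Prod.smul_fst,
      Prod.smul_snd]
    rw [norm_add_sq_real, norm_smul, inner_smul_right, EuclideanSpace.inner_single_right]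
    simp; ring

lemma sq_apply_tangential_le (φ : En n × ℝ →L[ℝ] ℝ) (h : En n) :
    φ (h, 0) ^ 2 ≤ ‖h‖ ^ 2 * ∑ o, φ (coordDir o) ^ 2 := by
  have hsum : φ (h, 0) = ∑ i, h i * φ (coordDir (some i)) := by
    have hh : ((h, 0) : En n × ℝ) = ∑ i, h i • coordDir (some i) := by
      ext j
      · simp [coordDir, Prod.fst_sum, Pi.single_apply]
      · simp [coordDir, Prod.snd_sum]
    rw [hh, map_sum]
    simp
  rw [hsum, EuclideanSpace.norm_sq_eq, Fintype.sum_option]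
  simp only [Real.norm_eq_abs, sq_abs]
  refine (Finset.sum_mul_sq_le_sq_mul_sq _ _ _).trans ?_
  gcongr
  exact le_add_of_nonneg_left (sq_nonneg _)

/-- The part of the closed Euclidean ball about `X₀` in the closed upper half space. -/
def upperClosedBall (X₀ : En n × ℝ) (R : ℝ) : Set (En n × ℝ) :=
  {X | 0 ≤ X.2 ∧ euclNorm (X - X₀) ≤ R}

/-- The part of the open Euclidean ball about `X₀` in the open upper half space. -/
def upperBall (X₀ : En n × ℝ) (R : ℝ) : Set (En n × ℝ) :=
  {X | 0 < X.2 ∧ euclNorm (X - X₀) < R}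

lemma isOpen_upperBall (X₀ : En n × ℝ) (R : ℝ) : IsOpen (upperBall X₀ R) :=
  (isOpen_lt continuous_const continuous_snd).inter
    (isOpen_lt (f := fun X => euclNorm (X - X₀)) (by fun_prop) continuous_const)

lemma isCompact_upperClosedBall (X₀ : En n × ℝ) (R : ℝ) : IsCompact (upperClosedBall X₀ R) := by
  refine Metric.isCompact_of_isClosed_isBounded
    ((isClosed_le continuous_const continuous_snd).inter
      (isClosed_le (f := fun X => euclNorm (X - X₀)) (by fun_prop) continuous_const)) ?_
  refine (Metric.isBounded_closedBall (x := X₀) (r := R)).subset fun X hX => ?_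
  rw [Metric.mem_closedBall, dist_eq_norm]
  exact (norm_le_euclNorm _).trans hX.2

lemma upperBall_subset_upperClosedBall (X₀ : En n × ℝ) (R : ℝ) :
    upperBall X₀ R ⊆ upperClosedBall X₀ R :=
  fun _ hX => ⟨hX.1.le, hX.2.le⟩

lemma mem_upperClosedBall_self {X₀ : En n × ℝ} {R : ℝ} (hX₀ : 0 ≤ X₀.2) (hR : 0 ≤ R) :
    X₀ ∈ upperClosedBall X₀ R :=
  ⟨hX₀, by simpa⟩

lemma upperClosedBall_mono (X₀ : En n × ℝ) {r R : ℝ} (h : r ≤ R) :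
    upperClosedBall X₀ r ⊆ upperClosedBall X₀ R :=
  fun _ hX => ⟨hX.1, hX.2.trans h⟩

lemma upperClosedBall_subset {X₀ X : En n × ℝ} {r s R : ℝ} (hX : X ∈ upperClosedBall X₀ r)
    (h : r + s ≤ R) : upperClosedBall X s ⊆ upperClosedBall X₀ R := by
  refine fun Z hZ => ⟨hZ.1, ?_⟩
  rw [← sub_add_sub_cancel' X X₀ Z]
  exact (euclNorm_add_le _ _).trans ((add_le_add hX.2 hZ.2).trans h)

lemma upperBall_subset {X₀ X : En n × ℝ} {r s R : ℝ} (hX : X ∈ upperClosedBall X₀ r)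
    (h : r + s ≤ R) : upperBall X s ⊆ upperBall X₀ R := by
  refine fun Z hZ => ⟨hZ.1, ?_⟩
  rw [← sub_add_sub_cancel' X X₀ Z]
  exact (euclNorm_add_le _ _).trans_lt ((add_lt_add_of_le_of_lt hX.2 hZ.2).trans_le h)

lemma upperClosedBall_add_mem {X₀ X V : En n × ℝ} {r R : ℝ} (hX : X ∈ upperClosedBall X₀ r)
    (hV : 0 ≤ V.2) (hVR : r + euclNorm V ≤ R) : X + V ∈ upperClosedBall X₀ R := by
  refine ⟨add_nonneg hX.1 hV, ?_⟩
  rw [add_sub_right_comm]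
  exact (euclNorm_add_le _ _).trans ((add_le_add_left hX.2 _).trans hVR)

lemma upperBall_add_mem {X₀ X V : En n × ℝ} {r R : ℝ} (hX : X ∈ upperBall X₀ r)
    (hV : 0 ≤ V.2) (hVR : r + euclNorm V ≤ R) : X + V ∈ upperBall X₀ R := by
  refine ⟨add_pos_of_pos_of_nonneg hX.1 hV, ?_⟩
  rw [add_sub_right_comm]
  exact (euclNorm_add_le _ _).trans_lt ((add_lt_add_left hX.2 _).trans_le hVR)

/-! ### The operator `Δ + (a / y) ∂_y` -/

/-- `d₁ o` and `d₂ o` are the first and second derivatives of `Φ` at `Z` in the direction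
`coordDir o`. -/
def HasCoordDeriv2At (Φ : En n × ℝ → ℝ) (d₁ d₂ : Option (Fin n) → ℝ) (Z : En n × ℝ) : Prop :=
  ∀ o, HasDeriv2At (fun t : ℝ => Φ (Z + t • coordDir o)) (d₁ o) (d₂ o) 0

/-- The pure second derivatives of `Φ` at `Z` exist and `ΔΦ + (a / y) ∂_y Φ` has the value `L`
there. -/
def HasALapAt (a : ℝ) (Φ : En n × ℝ → ℝ) (L : ℝ) (Z : En n × ℝ) : Prop :=
  ∃ d₁ d₂, HasCoordDeriv2At Φ d₁ d₂ Z ∧ ∑ o, d₂ o + a / Z.2 * d₁ none = L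

namespace HasCoordDeriv2At

variable {Φ Ψ : En n × ℝ → ℝ} {d₁ d₂ e₁ e₂ : Option (Fin n) → ℝ} {Z : En n × ℝ}

lemma mul (hΦ : HasCoordDeriv2At Φ d₁ d₂ Z) (hΨ : HasCoordDeriv2At Ψ e₁ e₂ Z) :
    HasCoordDeriv2At (fun X => Φ X * Ψ X) (fun o => d₁ o * Ψ Z + Φ Z * e₁ o)
      (fun o => d₂ o * Ψ Z + 2 * d₁ o * e₁ o + Φ Z * e₂ o) Z :=
  fun o => ((hΦ o).mul (hΨ o)).congr_deriv (by simp) (by simp)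

lemma comp (hΦ : HasCoordDeriv2At Φ d₁ d₂ Z) {φ : ℝ → ℝ} {c₁ c₂ : ℝ}
    (hφ : HasDeriv2At φ c₁ c₂ (Φ Z)) :
    HasCoordDeriv2At (fun X => φ (Φ X)) (fun o => c₁ * d₁ o)
      (fun o => c₂ * d₁ o ^ 2 + c₁ * d₂ o) Z :=
  fun o => HasDeriv2At.comp (by simpa using hφ) (hΦ o)

lemma hasALapAt (hΦ : HasCoordDeriv2At Φ d₁ d₂ Z) (a : ℝ) :
    HasALapAt a Φ (∑ o, d₂ o + a / Z.2 * d₁ none) Z :=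
  ⟨d₁, d₂, hΦ, rfl⟩

lemma snd (Z : En n × ℝ) : HasCoordDeriv2At Prod.snd (Pi.single none 1) 0 Z := by
  rintro (_ | i)
  · simpa [coordDir] using (HasDeriv2At.const (x := 0) Z.2).add .id
  · simpa [coordDir] using HasDeriv2At.const (x := 0) Z.2

lemma comp_snd {φ : ℝ → ℝ} {c₁ c₂ : ℝ} (hφ : HasDeriv2At φ c₁ c₂ Z.2) :
    HasCoordDeriv2At (fun X : En n × ℝ => φ X.2) (Pi.single none c₁) (Pi.single none c₂) Z := by
  intro o
  refine ((HasCoordDeriv2At.snd Z).comp hφ o).congr_deriv ?_ ?_ <;> cases o <;> simp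

lemma euclNorm_sub_sq (X₀ Z : En n × ℝ) :
    HasCoordDeriv2At (fun X => euclNorm (X - X₀) ^ 2) (fun o => 2 * coord o (Z - X₀))
      (fun _ => 2) Z := by
  intro o
  simp only [add_sub_right_comm, euclNorm_add_smul_coordDir_sq]
  exact (HasDeriv2At.quadratic _ _ 1).congr_deriv rfl (mul_one 2)

end HasCoordDeriv2At

lemma hasDerivAt_line (X v : En n × ℝ) (t : ℝ) : HasDerivAt (fun t : ℝ => X + t • v) v t := by
  simpa using ((hasDerivAt_id t).smul_const v).const_add X

lemma hasDerivAt_comp_line {u : En n × ℝ → ℝ} {X v : En n × ℝ} {t : ℝ}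
    (hu : DifferentiableAt ℝ u (X + t • v)) :
    HasDerivAt (fun t => u (X + t • v)) (fderiv ℝ u (X + t • v) v) t :=
  hu.hasFDerivAt.comp_hasDerivAt t (hasDerivAt_line X v t)

lemma differentiableAt_fderiv_apply {u : En n × ℝ → ℝ} {X : En n × ℝ} (hu : ContDiffAt ℝ 2 u X)
    (v : En n × ℝ) : DifferentiableAt ℝ (fun Y => fderiv ℝ u Y v) X :=
  ((hu.fderiv_right (m := 1) (by norm_num)).differentiableAt one_ne_zero).clm_apply
    (differentiableAt_const v)

lemma hasDerivAt_fderiv_comp_line {u : En n × ℝ → ℝ} {X v : En n × ℝ} {t : ℝ}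
    (hu : ContDiffAt ℝ 2 u (X + t • v)) :
    HasDerivAt (fun t => fderiv ℝ u (X + t • v) v) (D2 u (X + t • v) v) t :=
  hasDerivAt_comp_line (differentiableAt_fderiv_apply hu v)

lemma hasDeriv2At_line {u : En n × ℝ → ℝ} {X : En n × ℝ} (hu : ContDiffAt ℝ 2 u X)
    (v : En n × ℝ) : HasDeriv2At (fun t : ℝ => u (X + t • v)) (fderiv ℝ u X v) (D2 u X v) 0 := by
  have hX : X + (0 : ℝ) • v = X := by simp
  refine ⟨fun t => fderiv ℝ u (X + t • v) v, ?_, by simp, ?_⟩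
  · have hev : ∀ᶠ Y in 𝓝 (X + (0 : ℝ) • v), ContDiffAt ℝ 2 u Y := by
      rw [hX]
      exact hu.eventually (by simp)
    filter_upwards [(hasDerivAt_line X v 0).continuousAt.eventually hev] with t ht using
      hasDerivAt_comp_line (ht.differentiableAt two_ne_zero)
  · have h := hasDerivAt_fderiv_comp_line (t := 0) (v := v) (hX.symm ▸ hu)
    rwa [hX] at h

lemma hasCoordDeriv2At_of_contDiffAt {u : En n × ℝ → ℝ} {X : En n × ℝ} (hu : ContDiffAt ℝ 2 u X) :
    HasCoordDeriv2At u (fun o => fderiv ℝ u X (coordDir o)) (fun o => D2 u X (coordDir o)) X :=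
  fun o => hasDeriv2At_line hu (coordDir o)

namespace HasALapAt

variable {a c L L' : ℝ} {Φ Ψ : En n × ℝ → ℝ} {Z : En n × ℝ}

lemma unique (h : HasALapAt a Φ L Z) (h' : HasALapAt a Φ L' Z) : L = L' := by
  obtain ⟨d₁, d₂, hd, rfl⟩ := h
  obtain ⟨e₁, e₂, he, rfl⟩ := h'
  obtain rfl : d₁ = e₁ := funext fun o => ((hd o).unique (he o)).1
  obtain rfl : d₂ = e₂ := funext fun o => ((hd o).unique (he o)).2
  rfl

lemma add (hΦ : HasALapAt a Φ L Z) (hΨ : HasALapAt a Ψ L' Z) :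
    HasALapAt a (fun X => Φ X + Ψ X) (L + L') Z := by
  obtain ⟨d₁, d₂, hd, rfl⟩ := hΦ
  obtain ⟨e₁, e₂, he, rfl⟩ := hΨ
  refine ⟨d₁ + e₁, d₂ + e₂, fun o => (hd o).add (he o), ?_⟩
  simp only [Pi.add_apply, Finset.sum_add_distrib]
  ring

lemma const_mul (c : ℝ) (hΦ : HasALapAt a Φ L Z) : HasALapAt a (fun X => c * Φ X) (c * L) Z := by
  obtain ⟨d₁, d₂, hd, rfl⟩ := hΦ
  refine ⟨c • d₁, c • d₂, fun o => (hd o).const_mul c, ?_⟩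
  simp only [Pi.smul_apply, smul_eq_mul, ← Finset.mul_sum]
  ring

lemma sub (hΦ : HasALapAt a Φ L Z) (hΨ : HasALapAt a Ψ L' Z) :
    HasALapAt a (fun X => Φ X - Ψ X) (L - L') Z := by
  simpa [sub_eq_add_neg] using hΦ.add (hΨ.const_mul (-1))

lemma comp_add_tangential {h : En n} (hΦ : HasALapAt a Φ L (Z + (h, 0))) :
    HasALapAt a (fun X => Φ (X + (h, 0))) L Z := by
  obtain ⟨d₁, d₂, hd, rfl⟩ := hΦ
  refine ⟨d₁, d₂, fun o => ?_, by simp⟩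
  simpa only [add_right_comm Z] using hd o

lemma comp_snd {φ : ℝ → ℝ} {c₁ c₂ : ℝ} (hφ : HasDeriv2At φ c₁ c₂ Z.2) :
    HasALapAt a (fun X : En n × ℝ => φ X.2) (c₂ + a / Z.2 * c₁) Z := by
  simpa using (HasCoordDeriv2At.comp_snd hφ).hasALapAt a

lemma congr_val (hΦ : HasALapAt a Φ L Z) (h : L = L') : HasALapAt a Φ L' Z := h ▸ hΦ

end HasALapAt

lemma lap_eq_sum (u : En n × ℝ → ℝ) (X : En n × ℝ) : lap u X = ∑ o, D2 u X (coordDir o) := by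
  rw [Fintype.sum_option, add_comm]
  rfl

lemma hasALapAt_of_contDiffAt {u : En n × ℝ → ℝ} {X : En n × ℝ} (hu : ContDiffAt ℝ 2 u X)
    (a : ℝ) : HasALapAt a u (lap u X + a / X.2 * fderiv ℝ u X (0, 1)) X := by
  rw [lap_eq_sum]
  exact (hasCoordDeriv2At_of_contDiffAt hu).hasALapAt a

namespace IsAHarmonicOn

variable {a : ℝ} {u w : En n × ℝ → ℝ} {Ω Ω' : Set (En n × ℝ)}

lemma mono (h : IsAHarmonicOn a u Ω) (hΩ : Ω' ⊆ Ω) : IsAHarmonicOn a u Ω' :=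
  ⟨h.1.mono hΩ, fun p hp => h.2 p (hΩ hp)⟩

lemma contDiffAt (h : IsAHarmonicOn a u Ω) (hΩ : IsOpen Ω) {X : En n × ℝ} (hX : X ∈ Ω) :
    ContDiffAt ℝ 2 u X :=
  h.1.contDiffAt (hΩ.mem_nhds hX)

lemma hasALapAt (h : IsAHarmonicOn a u Ω) (hΩ : IsOpen Ω) {X : En n × ℝ} (hX : X ∈ Ω) :
    HasALapAt a u 0 X :=
  (hasALapAt_of_contDiffAt (h.contDiffAt hΩ hX) a).congr_val (h.2 X hX)

lemma of_hasALapAt (hu : ∀ X ∈ Ω, ContDiffAt ℝ 2 u X) (hL : ∀ X ∈ Ω, HasALapAt a u 0 X) :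
    IsAHarmonicOn a u Ω :=
  ⟨fun X hX => (hu X hX).contDiffWithinAt, fun X hX =>
    (hasALapAt_of_contDiffAt (hu X hX) a).unique (hL X hX)⟩

end IsAHarmonicOn

/-- The tangential difference `u(x + h, y) - u(x, y)`. -/
def tangentialDiff (h : En n) (u : En n × ℝ → ℝ) (X : En n × ℝ) : ℝ :=
  u (X + (h, 0)) - u X

section TangentialDiff

variable {a : ℝ} {u : En n × ℝ → ℝ} {X : En n × ℝ} {h : En n}

lemma contDiffAt_tangentialDiff (hu : ContDiffAt ℝ 2 u X) (huh : ContDiffAt ℝ 2 u (X + (h, 0))) :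
    ContDiffAt ℝ 2 (tangentialDiff h u) X :=
  (huh.comp X (by fun_prop)).sub hu

lemma HasALapAt.tangentialDiff (hu : HasALapAt a u 0 X) (huh : HasALapAt a u 0 (X + (h, 0))) :
    HasALapAt a (tangentialDiff h u) 0 X :=
  (huh.comp_add_tangential.sub hu).congr_val (sub_zero 0)

lemma IsAHarmonicOn.tangentialDiff {Ω Ω' : Set (En n × ℝ)} (hu : IsAHarmonicOn a u Ω)
    (hΩ : IsOpen Ω) (hsub : Ω' ⊆ Ω) (hshift : ∀ X ∈ Ω', X + (h, 0) ∈ Ω) :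
    IsAHarmonicOn a (tangentialDiff h u) Ω' :=
  .of_hasALapAt
    (fun _ hX => contDiffAt_tangentialDiff (hu.contDiffAt hΩ (hsub hX))
      (hu.contDiffAt hΩ (hshift _ hX)))
    fun _ hX => (hu.hasALapAt hΩ (hsub hX)).tangentialDiff (hu.hasALapAt hΩ (hshift _ hX))

end TangentialDiff

/-! ### The weak maximum principle -/

lemma HasALapAt.nonpos_of_isLocalMax {a L : ℝ} {Φ : En n × ℝ → ℝ} {Z : En n × ℝ}
    (hΦ : HasALapAt a Φ L Z) (hmax : IsLocalMax Φ Z) : L ≤ 0 := by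
  obtain ⟨d₁, d₂, hd, rfl⟩ := hΦ
  have hd (o) : d₁ o = 0 ∧ d₂ o ≤ 0 := by
    refine (hd o).deriv_eq_zero_and_nonpos_of_isLocalMax ?_
    have hline : Tendsto (fun t : ℝ => Z + t • (coordDir o : En n × ℝ)) (𝓝 0) (𝓝 Z) := by
      simpa [ContinuousAt] using (hasDerivAt_line Z (coordDir o) 0).continuousAt
    simpa [IsLocalMax, IsMaxFilter] using hline.eventually hmax
  rw [(hd none).1, mul_zero, add_zero]
  exact Finset.sum_nonpos fun o _ => (hd o).2

lemma hasALapAt_snd_sq {Z : En n × ℝ} (hZ : 0 < Z.2) (a : ℝ) :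
    HasALapAt a (fun X : En n × ℝ => X.2 ^ 2) (2 * (1 + a)) Z := by
  simp only [sq]
  refine (HasALapAt.comp_snd (HasDeriv2At.id.mul .id)).congr_val ?_
  field_simp
  ring

/-- The perturbation `ε y²` makes a subsolution strict, since `Δy² + (a / y) ∂_y y² = 2 (1 + a)`. -/
theorem le_of_hasALapAt_nonneg {a B : ℝ} (ha : -1 < a) {S U : Set (En n × ℝ)}
    {Φ : En n × ℝ → ℝ} (hS : IsCompact S) (hU : IsOpen U) (hUS : U ⊆ S)
    (hU0 : ∀ Z ∈ U, 0 < Z.2) (hΦ : ContinuousOn Φ S)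
    (hL : ∀ Z ∈ U, ∃ L, 0 ≤ L ∧ HasALapAt a Φ L Z) (hB : ∀ Z ∈ S \ U, Φ Z ≤ B)
    {X : En n × ℝ} (hX : X ∈ S) : Φ X ≤ B := by
  obtain ⟨C, hC⟩ := hS.exists_bound_of_continuousOn (f := fun Z : En n × ℝ => Z.2 ^ 2)
    (by fun_prop)
  have hC (Z) (hZ : Z ∈ S) : Z.2 ^ 2 ≤ C := (le_abs_self _).trans (hC Z hZ)
  have hperturb (ε : ℝ) (hε : 0 < ε) : Φ X ≤ B + ε * C := by
    obtain ⟨Z, hZ, hmax⟩ := hS.exists_isMaxOn ⟨X, hX⟩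
      (hΦ.add (by fun_prop : ContinuousOn (fun Z : En n × ℝ => ε * Z.2 ^ 2) S))
    have hZU : Z ∉ U := fun hZU => by
      obtain ⟨L, hL0, hL⟩ := hL Z hZU
      have hle := (hL.add ((hasALapAt_snd_sq (hU0 Z hZU) a).const_mul ε)).nonpos_of_isLocalMax
        (hmax.isLocalMax (mem_of_superset (hU.mem_nhds hZU) hUS))
      have : 0 < ε * (2 * (1 + a)) := mul_pos hε (by linarith)
      linarith
    calc Φ X ≤ Φ X + ε * X.2 ^ 2 := le_add_of_nonneg_right (by positivity)
      _ ≤ Φ Z + ε * Z.2 ^ 2 := hmax hX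
      _ ≤ B + ε * C := by gcongr <;> [exact hB Z ⟨hZ, hZU⟩; exact hC Z hZ]
  have hlim : Tendsto (fun ε : ℝ => B + ε * C) (𝓝[>] 0) (𝓝 B) := by
    have hcont : Continuous fun ε : ℝ => B + ε * C := by fun_prop
    simpa using (hcont.tendsto 0).mono_left nhdsWithin_le_nhds
  exact ge_of_tendsto hlim (eventually_mem_nhdsWithin.mono hperturb)

/-! ### Bernstein's estimate for tangential differences -/

/-- The cutoff `1 - |X - X₀|² / r²`, which vanishes on the sphere of radius `r` about `X₀`. -/
def cutoff (X₀ : En n × ℝ) (r : ℝ) (X : En n × ℝ) : ℝ :=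
  1 - euclNorm (X - X₀) ^ 2 / r ^ 2

section Cutoff

variable {X₀ Z : En n × ℝ} {r : ℝ}

@[fun_prop]
lemma continuous_cutoff : Continuous (cutoff X₀ r) := by
  unfold cutoff
  fun_prop

lemma euclNorm_sq_div_sq_le_one (hZ : euclNorm (Z - X₀) ≤ r) :
    euclNorm (Z - X₀) ^ 2 / r ^ 2 ≤ 1 :=
  div_le_one_of_le₀ (pow_le_pow_left₀ (euclNorm_nonneg _) hZ 2) (sq_nonneg r)

lemma cutoff_mem_Icc (hZ : euclNorm (Z - X₀) ≤ r) : cutoff X₀ r Z ∈ Icc 0 1 :=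
  ⟨sub_nonneg.2 (euclNorm_sq_div_sq_le_one hZ), sub_le_self 1 (by positivity)⟩

lemma hasCoordDeriv2At_cutoff :
    HasCoordDeriv2At (cutoff X₀ r) (fun o => -(2 * coord o (Z - X₀) / r ^ 2))
      (fun _ => -(2 / r ^ 2)) Z := by
  intro o
  have h := (HasDeriv2At.const 1).add
    ((HasCoordDeriv2At.euclNorm_sub_sq X₀ Z o).const_mul (-(1 / r ^ 2)))
  have hcutoff : cutoff X₀ r = fun X => 1 + -(1 / r ^ 2) * euclNorm (X - X₀) ^ 2 := by
    ext X
    rw [cutoff]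
    ring
  rw [hcutoff]
  exact h.congr_deriv (by ring) (by ring)

lemma sum_sq_deriv_cutoff_le (hr : 0 < r) (hZ : euclNorm (Z - X₀) ≤ r) :
    ∑ o, (-(2 * coord o (Z - X₀) / r ^ 2)) ^ 2 ≤ 4 / r ^ 2 := by
  have hsum : ∑ o, (-(2 * coord o (Z - X₀) / r ^ 2)) ^ 2 =
      4 / r ^ 2 * (euclNorm (Z - X₀) ^ 2 / r ^ 2) := by
    rw [euclNorm_sq_eq_sum, Finset.sum_div, Finset.mul_sum]
    exact Finset.sum_congr rfl fun o _ => by field_simp; ring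
  rw [hsum]
  exact mul_le_of_le_one_right (by positivity) (euclNorm_sq_div_sq_le_one hZ)

lemma le_aLap_cutoff {a : ℝ} (ha : a ∈ Icc 0 1) (hX₀ : 0 ≤ X₀.2) (hZ : 0 < Z.2) :
    -(2 * (n + 2) / r ^ 2) ≤
      ∑ _o : Option (Fin n), -(2 / r ^ 2) + a / Z.2 * -(2 * coord none (Z - X₀) / r ^ 2) := by
  have hsum : ∑ _o : Option (Fin n), -(2 / r ^ 2) +
      a / Z.2 * -(2 * coord none (Z - X₀) / r ^ 2) =
      -(2 * (n + 2) / r ^ 2) + 2 * (1 - a + a * (X₀.2 / Z.2)) / r ^ 2 := by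
    simp only [coord, Prod.snd_sub, Finset.sum_const, Finset.card_univ, Fintype.card_option,
      Fintype.card_fin, nsmul_eq_mul, Nat.cast_add, Nat.cast_one]
    field_simp
    ring
  rw [hsum]
  have h₁ : 0 ≤ 1 - a := sub_nonneg.2 ha.2
  have h₂ : 0 ≤ a * (X₀.2 / Z.2) := mul_nonneg ha.1 (by positivity)
  exact le_add_of_nonneg_right (by positivity)

end Cutoff

lemma HasALapAt.exists_sq_mul {a : ℝ} {η W : En n × ℝ → ℝ} {e₁ e₂ : Option (Fin n) → ℝ}
    {Z : En n × ℝ} (hW : HasALapAt a W 0 Z) (hη : HasCoordDeriv2At η e₁ e₂ Z) :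
    ∃ L, 2 * η Z * W Z ^ 2 * (∑ o, e₂ o + a / Z.2 * e₁ none) - 6 * W Z ^ 2 * ∑ o, e₁ o ^ 2 ≤ L ∧
      HasALapAt a (fun X => (η X * W X) ^ 2) L Z := by
  obtain ⟨w₁, w₂, hw, hharm⟩ := hW
  have hsq : HasDeriv2At (fun t : ℝ => t ^ 2) (2 * (η Z * W Z)) 2 (η Z * W Z) := by
    simp only [sq]
    exact (HasDeriv2At.id.mul .id).congr_deriv (by ring) (by ring)
  refine ⟨_, ?_, ((hη.mul hw).comp hsq).hasALapAt a⟩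
  have hterm (o : Option (Fin n)) :
      2 * η Z * W Z ^ 2 * e₂ o - 6 * W Z ^ 2 * e₁ o ^ 2 + 2 * η Z ^ 2 * W Z * w₂ o ≤
        2 * (e₁ o * W Z + η Z * w₁ o) ^ 2 +
          2 * (η Z * W Z) * (e₂ o * W Z + 2 * e₁ o * w₁ o + η Z * w₂ o) := by
    nlinarith only [sq_nonneg (η Z * w₁ o + 2 * e₁ o * W Z)]
  refine le_trans (le_of_eq ?_) (add_le_add_left (Finset.sum_le_sum fun o _ => hterm o) _)
  simp only [Finset.sum_add_distrib, Finset.sum_sub_distrib, ← Finset.mul_sum]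
  linear_combination -(2 * η Z ^ 2 * W Z) * hharm

/-- The mean of `u²` over the tangential segment from `X` to `X + (h, 0)`. It plays the role of
`u²` in Bernstein's method for differences: applied to it, `Δ + (a / y) ∂_y` controls the square of
`tangentialDiff h u`. -/
def segmentMeanSq (h : En n) (u : En n × ℝ → ℝ) (X : En n × ℝ) : ℝ :=
  ∫ τ in (0 : ℝ)..1, u (X + τ • (h, 0)) ^ 2

section SegmentMeanSq

variable {u : En n × ℝ → ℝ} {S S' Ω : Set (En n × ℝ)} {X Z : En n × ℝ} {h : En n} {K : ℝ}

lemma segmentMeanSq_nonneg (h : En n) (u : En n × ℝ → ℝ) (X : En n × ℝ) :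
    0 ≤ segmentMeanSq h u X :=
  intervalIntegral.integral_nonneg zero_le_one fun _ _ => sq_nonneg _

lemma continuousOn_comp_segment {G : En n × ℝ → ℝ} (hG : ContinuousOn G Ω)
    (hseg : ∀ τ ∈ Icc (0 : ℝ) 1, Z + τ • (h, 0) ∈ Ω) :
    ContinuousOn (fun τ : ℝ => G (Z + τ • (h, 0))) (Icc 0 1) :=
  hG.comp (by fun_prop) hseg

lemma intervalIntegrable_of_continuousOn_Icc {g : ℝ → ℝ} (hg : ContinuousOn g (Icc 0 1)) :
    IntervalIntegrable g volume 0 1 :=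
  ContinuousOn.intervalIntegrable_of_Icc zero_le_one hg

lemma segmentMeanSq_le (hu : ContinuousOn u S') (hK : ∀ Y ∈ S', |u Y| ≤ K)
    (hseg : ∀ τ ∈ Icc (0 : ℝ) 1, X + τ • (h, 0) ∈ S') : segmentMeanSq h u X ≤ K ^ 2 := by
  have hmono : segmentMeanSq h u X ≤ ∫ _ in (0 : ℝ)..1, K ^ 2 :=
    intervalIntegral.integral_mono_on zero_le_one
      (intervalIntegrable_of_continuousOn_Icc ((continuousOn_comp_segment hu hseg).pow 2))
      intervalIntegrable_const fun τ hτ => sq_le_sq' (abs_le.1 (hK _ (hseg τ hτ))).1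
        (abs_le.1 (hK _ (hseg τ hτ))).2
  simpa using hmono

lemma continuousOn_segmentMeanSq (hu : ContinuousOn u S') (hK : ∀ Y ∈ S', |u Y| ≤ K)
    (hseg : ∀ X ∈ S, ∀ τ ∈ Icc (0 : ℝ) 1, X + τ • (h, 0) ∈ S') :
    ContinuousOn (segmentMeanSq h u) S := by
  intro X hX
  have hIcc {τ : ℝ} (hτ : τ ∈ uIoc (0 : ℝ) 1) : τ ∈ Icc (0 : ℝ) 1 := by
    rw [uIoc_of_le zero_le_one] at hτ
    exact Ioc_subset_Icc_self hτ
  apply intervalIntegral.continuousWithinAt_of_dominated_interval (bound := fun _ => K ^ 2)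
  · filter_upwards [self_mem_nhdsWithin] with Y hY
    have hcont := (continuousOn_comp_segment hu (hseg Y hY)).pow 2
    exact (hcont.mono fun _ => hIcc).aestronglyMeasurable measurableSet_uIoc
  · filter_upwards [self_mem_nhdsWithin] with Y hY
    refine Eventually.of_forall fun τ hτ => ?_
    rw [norm_pow, Real.norm_eq_abs]
    exact pow_le_pow_left₀ (abs_nonneg _) (hK _ (hseg Y hY τ (hIcc hτ))) 2
  · exact intervalIntegrable_const
  · refine Eventually.of_forall fun τ hτ => ?_
    exact (hu.comp (by fun_prop) fun Y hY => hseg Y hY τ (hIcc hτ)).pow 2 X hX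

lemma exists_segment_add_smul_mem (hΩ : IsOpen Ω)
    (hseg : ∀ τ ∈ Icc (0 : ℝ) 1, Z + τ • (h, 0) ∈ Ω) :
    ∃ δ : ℝ, 0 < δ ∧ ∀ v : En n × ℝ, ‖v‖ ≤ 1 → ∀ t ∈ Icc (-δ) δ, ∀ τ ∈ Icc (0 : ℝ) 1,
      Z + τ • (h, 0) + t • v ∈ Ω := by
  have hcompact : IsCompact ((fun τ : ℝ => Z + τ • ((h, 0) : En n × ℝ)) '' Icc 0 1) :=
    isCompact_Icc.image (by fun_prop)
  obtain ⟨δ, hδ, hsub⟩ := hcompact.exists_cthickening_subset_open hΩ (image_subset_iff.2 hseg)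
  refine ⟨δ, hδ, fun v hv t ht τ hτ => hsub ?_⟩
  refine Metric.mem_cthickening_of_dist_le _ _ _ _ (mem_image_of_mem _ hτ) ?_
  rw [dist_eq_norm, add_sub_cancel_left, norm_smul]
  exact (mul_le_of_le_one_right (norm_nonneg t) hv).trans (abs_le.2 ht)

lemma continuousOn_fderiv_apply (hΩ : IsOpen Ω) (hu : ContDiffOn ℝ 2 u Ω) (v : En n × ℝ) :
    ContinuousOn (fun X => fderiv ℝ u X v) Ω :=
  (hu.continuousOn_fderiv_of_isOpen hΩ one_le_two).clm_apply continuousOn_const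

lemma continuousOn_D2 (hΩ : IsOpen Ω) (hu : ContDiffOn ℝ 2 u Ω) (v : En n × ℝ) :
    ContinuousOn (fun X => D2 u X v) Ω :=
  (((hu.fderiv_of_isOpen hΩ (by norm_num)).clm_apply contDiffOn_const).continuousOn_fderiv_of_isOpen
    hΩ le_rfl).clm_apply continuousOn_const

lemma hasCoordDeriv2At_segmentMeanSq (hΩ : IsOpen Ω) (hu : ContDiffOn ℝ 2 u Ω)
    (hseg : ∀ τ ∈ Icc (0 : ℝ) 1, Z + τ • (h, 0) ∈ Ω) :
    HasCoordDeriv2At (segmentMeanSq h u)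
      (fun o => ∫ τ in (0 : ℝ)..1,
        2 * u (Z + τ • (h, 0)) * fderiv ℝ u (Z + τ • (h, 0)) (coordDir o))
      (fun o => ∫ τ in (0 : ℝ)..1, (2 * fderiv ℝ u (Z + τ • (h, 0)) (coordDir o) ^ 2 +
        2 * u (Z + τ • (h, 0)) * D2 u (Z + τ • (h, 0)) (coordDir o))) Z := by
  intro o
  obtain ⟨δ, hδ, hmem⟩ := exists_segment_add_smul_mem hΩ hseg
  have hmem := hmem (coordDir o) ((norm_le_euclNorm _).trans_eq (euclNorm_coordDir o))
  have hcont {G : En n × ℝ → ℝ} (hG : ContinuousOn G Ω) : ContinuousOn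
      (fun q : ℝ × ℝ => G (Z + q.2 • (h, 0) + q.1 • coordDir o)) (Icc (-δ) δ ×ˢ uIcc 0 1) :=
    hG.comp (by fun_prop) fun q hq => hmem q.1 hq.1 q.2 (by simpa using hq.2)
  have hcd := hcont (continuousOn_fderiv_apply hΩ hu (coordDir o))
  have hcu := hcont hu.continuousOn
  have hdiff {t τ : ℝ} (ht : t ∈ interior (Icc (-δ) δ)) (hτ : τ ∈ uIcc (0 : ℝ) 1) :
      ContDiffAt ℝ 2 u (Z + τ • (h, 0) + t • coordDir o) :=
    hu.contDiffAt (hΩ.mem_nhds (hmem t (interior_subset ht) τ (by simpa using hτ)))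
  have hint := HasDeriv2At.intervalIntegral
    (F := fun t τ => u (Z + τ • (h, 0) + t • coordDir o) ^ 2)
    (F₁ := fun t τ => 2 * u (Z + τ • (h, 0) + t • coordDir o) *
      fderiv ℝ u (Z + τ • (h, 0) + t • coordDir o) (coordDir o))
    (F₂ := fun t τ => 2 * fderiv ℝ u (Z + τ • (h, 0) + t • coordDir o) (coordDir o) ^ 2 +
      2 * u (Z + τ • (h, 0) + t • coordDir o) * D2 u (Z + τ • (h, 0) + t • coordDir o) (coordDir o))
    (x := 0) (isCompact_Icc (a := -δ) (b := δ))
    (Icc_mem_nhds (neg_lt_zero.2 hδ) hδ) (hcu.pow 2) ((hcu.const_mul 2).mul hcd)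
    (((hcd.pow 2).const_mul 2).add
      ((hcu.const_mul 2).mul (hcont (continuousOn_D2 hΩ hu (coordDir o)))))
    (fun t ht τ hτ =>
      ((hasDerivAt_comp_line ((hdiff ht hτ).differentiableAt two_ne_zero)).pow 2).congr_deriv
        (by simp))
    (fun t ht τ hτ =>
      (((hasDerivAt_comp_line ((hdiff ht hτ).differentiableAt two_ne_zero)).const_mul 2).mul
        (hasDerivAt_fderiv_comp_line (hdiff ht hτ))).congr_deriv (by ring))
  simpa [segmentMeanSq, add_right_comm Z] using hint

lemma sq_tangentialDiff_le_integral (hΩ : IsOpen Ω) (hu : ContDiffOn ℝ 2 u Ω)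
    (hseg : ∀ τ ∈ Icc (0 : ℝ) 1, Z + τ • (h, 0) ∈ Ω) :
    tangentialDiff h u Z ^ 2 ≤
      ‖h‖ ^ 2 * ∫ τ in (0 : ℝ)..1, ∑ o, fderiv ℝ u (Z + τ • (h, 0)) (coordDir o) ^ 2 := by
  have hcont (v) := continuousOn_comp_segment (continuousOn_fderiv_apply hΩ hu v) hseg
  have hftc : ∫ τ in (0 : ℝ)..1, fderiv ℝ u (Z + τ • (h, 0)) (h, 0) = tangentialDiff h u Z := by
    have h := intervalIntegral.integral_eq_sub_of_hasDerivAt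
      (f := fun τ : ℝ => u (Z + τ • (h, 0))) (fun τ hτ => hasDerivAt_comp_line
        ((hu.contDiffAt (hΩ.mem_nhds (hseg τ (by simpa using hτ)))).differentiableAt two_ne_zero))
      (intervalIntegrable_of_continuousOn_Icc (hcont (h, 0)))
    simpa [tangentialDiff] using h
  rw [← hftc, ← intervalIntegral.integral_const_mul]
  refine (sq_intervalIntegral_le (hcont (h, 0))).trans ?_
  refine intervalIntegral.integral_mono_on zero_le_one
    (intervalIntegrable_of_continuousOn_Icc ((hcont (h, 0)).pow 2))
    (intervalIntegrable_of_continuousOn_Icc ?_) fun τ _ => sq_apply_tangential_le _ h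
  exact (continuousOn_finsetSum _ fun o _ => (hcont (coordDir o)).pow 2).const_mul _

lemma IsAHarmonicOn.hasALapAt_segmentMeanSq {a : ℝ} (hΩ : IsOpen Ω) (hu : IsAHarmonicOn a u Ω)
    (hseg : ∀ τ ∈ Icc (0 : ℝ) 1, Z + τ • (h, 0) ∈ Ω) :
    HasALapAt a (segmentMeanSq h u)
      (2 * ∫ τ in (0 : ℝ)..1, ∑ o, fderiv ℝ u (Z + τ • (h, 0)) (coordDir o) ^ 2) Z := by
  refine ((hasCoordDeriv2At_segmentMeanSq hΩ hu.1 hseg).hasALapAt a).congr_val ?_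
  have hcont {G : En n × ℝ → ℝ} (hG : ContinuousOn G Ω) :
      ContinuousOn (fun τ : ℝ => G (Z + τ • (h, 0))) (Icc 0 1) := continuousOn_comp_segment hG hseg
  have hcu := hcont hu.1.continuousOn
  have hcd (o) := hcont (continuousOn_fderiv_apply hΩ hu.1 (coordDir o))
  have hint (o : Option (Fin n)) : IntervalIntegrable (fun τ : ℝ =>
      2 * fderiv ℝ u (Z + τ • (h, 0)) (coordDir o) ^ 2 +
        2 * u (Z + τ • (h, 0)) * D2 u (Z + τ • (h, 0)) (coordDir o)) volume 0 1 :=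
    intervalIntegrable_of_continuousOn_Icc ((((hcd o).pow 2).const_mul 2).add
      ((hcu.const_mul 2).mul (hcont (continuousOn_D2 hΩ hu.1 (coordDir o)))))
  have hint' : IntervalIntegrable (fun τ : ℝ => a / Z.2 *
      (2 * u (Z + τ • (h, 0)) * fderiv ℝ u (Z + τ • (h, 0)) (coordDir none))) volume 0 1 :=
    intervalIntegrable_of_continuousOn_Icc (((hcu.const_mul 2).mul (hcd none)).const_mul (a / Z.2))
  rw [← intervalIntegral.integral_finsetSum fun o _ => hint o,
    ← intervalIntegral.integral_const_mul, ← intervalIntegral.integral_const_mul,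
    ← intervalIntegral.integral_add ?_ hint']
  · refine intervalIntegral.integral_congr fun τ hτ => ?_
    have hharm := hu.2 _ (hseg τ (by simpa using hτ))
    rw [lap_eq_sum] at hharm
    simp only [Prod.snd_add, Prod.smul_snd, smul_zero, add_zero] at hharm
    simp only [Finset.sum_add_distrib, ← Finset.mul_sum]
    change _ + a / Z.2 * fderiv ℝ u (Z + τ • (h, 0)) (coordDir none) = 0 at hharm
    linear_combination (2 * u (Z + τ • (h, 0))) * hharm
  · simpa only [Finset.sum_fn] using IntervalIntegrable.sum Finset.univ fun o _ => hint o

end SegmentMeanSq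

section Bernstein

variable {a r K M : ℝ} {u : En n × ℝ → ℝ} {Ω : Set (En n × ℝ)} {X₀ Z : En n × ℝ} {h : En n}

/- The cutoff costs at most `24 W² / r² + 4 (n + 2) W² / r²`, where `W = tangentialDiff h u`; the
segment mean pays `2 (n + 4)² W² / r²` for it. -/
lemma exists_hasALapAt_nonneg_cutoff_mul_tangentialDiff (ha : a ∈ Icc 0 1) (hr : 0 < r)
    (hX₀ : 0 ≤ X₀.2) (hΩ : IsOpen Ω) (hu : IsAHarmonicOn a u Ω)
    (hseg : ∀ τ ∈ Icc (0 : ℝ) 1, Z + τ • (h, 0) ∈ Ω) (hZ : Z ∈ upperBall X₀ r) :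
    ∃ L, 0 ≤ L ∧ HasALapAt a (fun X => (cutoff X₀ r X * tangentialDiff h u X) ^ 2 +
      ((n + 4) ^ 2 / r ^ 2 * ‖h‖ ^ 2) * segmentMeanSq h u X) L Z := by
  have hharm : HasALapAt a (tangentialDiff h u) 0 Z :=
    .tangentialDiff (hu.hasALapAt hΩ (by simpa using hseg 0 ⟨le_rfl, zero_le_one⟩))
      (hu.hasALapAt hΩ (by simpa using hseg 1 ⟨zero_le_one, le_rfl⟩))
  obtain ⟨L, hL, hW⟩ := hharm.exists_sq_mul (hasCoordDeriv2At_cutoff (X₀ := X₀) (r := r))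
  refine ⟨_, ?_, hW.add ((hu.hasALapAt_segmentMeanSq hΩ hseg).const_mul _)⟩
  set W := tangentialDiff h u Z
  set I := ∫ τ in (0 : ℝ)..1, ∑ o, fderiv ℝ u (Z + τ • (h, 0)) (coordDir o) ^ 2
  have hWI : W ^ 2 ≤ ‖h‖ ^ 2 * I := sq_tangentialDiff_le_integral hΩ hu.1 hseg
  have hcut := cutoff_mem_Icc hZ.2.le
  have hgrad := mul_le_mul_of_nonneg_left (sum_sq_deriv_cutoff_le hr hZ.2.le)
    (by positivity : 0 ≤ 6 * W ^ 2)
  have hlap := mul_le_mul_of_nonneg_left (le_aLap_cutoff (r := r) ha hX₀ hZ.1)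
    (mul_nonneg (mul_nonneg zero_le_two hcut.1) (sq_nonneg W))
  have hcutW : cutoff X₀ r Z * (4 * (n + 2) / r ^ 2 * W ^ 2) ≤ 4 * (n + 2) / r ^ 2 * W ^ 2 :=
    mul_le_of_le_one_left (by positivity) hcut.2
  have hmean := mul_le_mul_of_nonneg_left hWI (by positivity : 0 ≤ 2 * (n + 4 : ℝ) ^ 2 / r ^ 2)
  have hpay : (24 + 4 * (n + 2)) / r ^ 2 * W ^ 2 ≤ 2 * (n + 4 : ℝ) ^ 2 / r ^ 2 * W ^ 2 := by
    gcongr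
    nlinarith only [Nat.cast_nonneg (α := ℝ) n]
  linear_combination hL + hgrad + hlap + hcutW + hmean + hpay

lemma add_smul_tangential_le_two_mul (hh : ‖h‖ ≤ r) {τ : ℝ} (hτ : τ ∈ Icc (0 : ℝ) 1) :
    r + euclNorm (τ • ((h, 0) : En n × ℝ)) ≤ 2 * r := by
  rw [euclNorm_smul, euclNorm_tangential, abs_of_nonneg hτ.1, two_mul]
  gcongr
  exact (mul_le_of_le_one_left (norm_nonneg h) hτ.2).trans hh

lemma segment_mem_upperClosedBall (hh : ‖h‖ ≤ r) (hZ : Z ∈ upperClosedBall X₀ r) {τ : ℝ}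
    (hτ : τ ∈ Icc (0 : ℝ) 1) : Z + τ • (h, 0) ∈ upperClosedBall X₀ (2 * r) :=
  upperClosedBall_add_mem hZ (by simp) (add_smul_tangential_le_two_mul hh hτ)

lemma add_tangential_mem_upperClosedBall (hh : ‖h‖ ≤ r) (hZ : Z ∈ upperClosedBall X₀ r) :
    Z + (h, 0) ∈ upperClosedBall X₀ (2 * r) := by
  simpa using segment_mem_upperClosedBall hh hZ ⟨zero_le_one, le_rfl⟩

lemma abs_cutoff_mul_tangentialDiff_le (hr : 0 < r) (hM₀ : 0 ≤ M)
    (hM : ∀ Z ∈ upperClosedBall X₀ r, Z.2 = 0 → |tangentialDiff h u Z| ≤ M * ‖h‖)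
    (hZ : Z ∈ upperClosedBall X₀ r \ upperBall X₀ r) :
    |cutoff X₀ r Z * tangentialDiff h u Z| ≤ M * ‖h‖ := by
  obtain ⟨hZS, hZU⟩ := hZ
  have hcut := cutoff_mem_Icc hZS.2
  rw [abs_mul, abs_of_nonneg hcut.1]
  rcases hZS.1.eq_or_lt with hZ₂ | hZ₂
  · exact (mul_le_of_le_one_left (abs_nonneg _) hcut.2).trans (hM Z hZS hZ₂.symm)
  · have hZr : euclNorm (Z - X₀) = r := hZS.2.antisymm (not_lt.1 fun hlt => hZU ⟨hZ₂, hlt⟩)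
    have hcut₀ : cutoff X₀ r Z = 0 := by simp [cutoff, hZr, hr.ne']
    rw [hcut₀, zero_mul]
    positivity

lemma abs_tangentialDiff_le_of_isAHarmonicOn (ha : a ∈ Icc 0 1) (hr : 0 < r)
    (hX₀ : 0 ≤ X₀.2) (hh : ‖h‖ ≤ r)
    (hc : ContinuousOn u (upperClosedBall X₀ (2 * r)))
    (hu : IsAHarmonicOn a u (upperBall X₀ (2 * r)))
    (hK : ∀ X ∈ upperClosedBall X₀ (2 * r), |u X| ≤ K) (hM₀ : 0 ≤ M)
    (hM : ∀ Z ∈ upperClosedBall X₀ r, Z.2 = 0 → |tangentialDiff h u Z| ≤ M * ‖h‖) :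
    |tangentialDiff h u X₀| ≤ (M + (n + 4) * K / r) * ‖h‖ := by
  have hX₀mem := mem_upperClosedBall_self hX₀ hr.le
  have hsub := upperClosedBall_mono X₀ (le_mul_of_one_le_left hr.le one_le_two)
  have hK₀ : 0 ≤ K := (abs_nonneg _).trans (hK _ (hsub hX₀mem))
  have hseg {X} (hX : X ∈ upperClosedBall X₀ r) {τ : ℝ} :=
    segment_mem_upperClosedBall hh hX (τ := τ)
  set ℓ := (n + 4) ^ 2 / r ^ 2 * ‖h‖ ^ 2 with hℓ
  have hℓ₀ : 0 ≤ ℓ := by positivity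
  have hcW : ContinuousOn (tangentialDiff h u) (upperClosedBall X₀ r) :=
    (hc.comp (by fun_prop) fun _ => add_tangential_mem_upperClosedBall hh).sub (hc.mono hsub)
  have hmax : (cutoff X₀ r X₀ * tangentialDiff h u X₀) ^ 2 + ℓ * segmentMeanSq h u X₀ ≤
      (M * ‖h‖) ^ 2 + ℓ * K ^ 2 := by
    refine le_of_hasALapAt_nonneg (by linarith [ha.1])
      (isCompact_upperClosedBall X₀ r) (isOpen_upperBall X₀ r)
      (upperBall_subset_upperClosedBall X₀ r)
      (fun _ hZ => hZ.1)
      (((continuous_cutoff.continuousOn.mul hcW).pow 2).add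
        ((continuousOn_segmentMeanSq hc hK fun _ hX _ => hseg hX).const_mul ℓ))
      (fun Z hZ => exists_hasALapAt_nonneg_cutoff_mul_tangentialDiff ha hr hX₀
        (isOpen_upperBall _ _) hu (fun τ hτ => upperBall_add_mem hZ (by simp)
          (add_smul_tangential_le_two_mul hh hτ)) hZ)
      (fun Z hZ => add_le_add ?_ (mul_le_mul_of_nonneg_left (segmentMeanSq_le hc hK fun _ =>
        hseg hZ.1) hℓ₀)) hX₀mem
    exact sq_le_sq.2 ((abs_cutoff_mul_tangentialDiff_le hr hM₀ hM hZ).trans (le_abs_self _))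
  have hW : tangentialDiff h u X₀ ^ 2 ≤ (M * ‖h‖) ^ 2 + ℓ * K ^ 2 := by
    refine le_trans ?_ hmax
    simpa [cutoff] using mul_nonneg hℓ₀ (segmentMeanSq_nonneg h u X₀)
  refine abs_le_of_sq_le_sq (hW.trans ?_) (by positivity)
  have hcross : 0 ≤ 2 * M * ((n + 4) * K / r) * ‖h‖ ^ 2 := by positivity
  rw [hℓ]
  linear_combination hcross

end Bernstein

/-! ### The equation in the normal variable -/

section NormalEquation

variable {a α β Y Q ℓ : ℝ} {g g₁ g₂ : ℝ → ℝ}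

lemma abs_sub_le_of_abs_deriv_le_rpow {b c : ℝ} (hb : 0 < b) (hg : ContinuousOn g (Icc 0 ℓ))
    (h₀ : ∀ t ∈ Ioo 0 ℓ, HasDerivAt g (g₁ t) t) (h₁ : ∀ t ∈ Ioo 0 ℓ, |g₁ t| ≤ c * t ^ (b - 1))
    {t : ℝ} (ht : t ∈ Icc 0 ℓ) : |g t - g 0| ≤ c / b * t ^ b := by
  have hmono (σ : ℝ) (hσ : |σ| = 1) : MonotoneOn (fun t => c / b * t ^ b - σ * g t) (Icc 0 ℓ) := by
    apply monotoneOn_of_hasDerivWithinAt_nonneg (convex_Icc 0 ℓ)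
      (f' := fun t => c / b * (b * t ^ (b - 1)) - σ * g₁ t)
    · exact ((Real.continuous_rpow_const hb.le).const_mul _).continuousOn.sub (hg.const_mul σ)
    · rw [interior_Icc]
      exact fun x hx => (((Real.hasDerivAt_rpow_const (Or.inl hx.1.ne')).const_mul _).sub
        ((h₀ x hx).const_mul σ)).hasDerivWithinAt
    · rw [interior_Icc]
      intro x hx
      rw [div_mul_eq_mul_div, ← mul_left_comm, mul_div_cancel_left₀ _ hb.ne', sub_nonneg]
      refine (le_abs_self _).trans ?_
      rw [abs_mul, hσ, one_mul]
      exact h₁ x hx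
  have h0mem : (0 : ℝ) ∈ Icc 0 ℓ := ⟨le_rfl, ht.1.trans ht.2⟩
  have hpos := hmono 1 (by simp) h0mem ht ht.1
  have hneg := hmono (-1) (by simp) h0mem ht ht.1
  simp only [Real.zero_rpow hb.ne'] at hpos hneg
  exact abs_le.2 ⟨by linarith, by linarith⟩

lemma hasDerivAt_rpow_mul {y d : ℝ} (hy : 0 < y) (h : HasDerivAt g₁ d y) :
    HasDerivAt (fun y => y ^ a * g₁ y) (y ^ a * (d + a / y * g₁ y)) y := by
  refine ((Real.hasDerivAt_rpow_const (p := a) (Or.inl hy.ne')).mul h).congr_deriv ?_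
  rw [Real.rpow_sub_one hy.ne']
  field_simp
  ring

lemma abs_rpow_mul_sub_rpow_mul_le (ha : 0 ≤ a) (hα : 0 ≤ α)
    (h₁ : ∀ y ∈ Ioo α β, HasDerivAt g₁ (g₂ y) y)
    (h₂ : ∀ y ∈ Ioo α β, |g₂ y + a / y * g₁ y| ≤ Q) {y z : ℝ} (hy : y ∈ Ioo α β)
    (hz : z ∈ Ioo α β) (hyY : y ≤ Y) (hzY : z ≤ Y) :
    |z ^ a * g₁ z - y ^ a * g₁ y| ≤ Q * Y ^ a * |z - y| := by
  have hQ : 0 ≤ Q := (abs_nonneg _).trans (h₂ y hy)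
  refine ((convex_Ioo α β).inter (convex_Iic Y)).norm_image_sub_le_of_norm_hasDerivWithin_le
    (fun x hx => (hasDerivAt_rpow_mul (hα.trans_lt hx.1.1) (h₁ x hx.1)).hasDerivWithinAt) ?_
    ⟨hy, hyY⟩ ⟨hz, hzY⟩
  intro x hx
  have hx₀ : 0 ≤ x := hα.trans hx.1.1.le
  rw [Real.norm_eq_abs, abs_mul, abs_of_nonneg (Real.rpow_nonneg hx₀ a), mul_comm]
  exact mul_le_mul (h₂ x hx.1) (Real.rpow_le_rpow hx₀ hx.2 ha) (Real.rpow_nonneg hx₀ a) hQ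

lemma exists_abs_deriv_le {B : ℝ} (hℓ : 0 < ℓ) (hg : ContinuousOn g (Icc α (α + ℓ)))
    (h₀ : ∀ y ∈ Ioo α (α + ℓ), HasDerivAt g (g₁ y) y) (hB : ∀ y ∈ Icc α (α + ℓ), |g y| ≤ B) :
    ∃ c ∈ Ioo α (α + ℓ), |g₁ c| ≤ 2 * B / ℓ := by
  have hlt : α < α + ℓ := lt_add_of_pos_right α hℓ
  obtain ⟨c, hc, hslope⟩ := exists_hasDerivAt_eq_slope g g₁ hlt hg h₀
  refine ⟨c, hc, ?_⟩
  rw [hslope, add_sub_cancel_left, abs_div, abs_of_pos hℓ, two_mul]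
  gcongr
  exact (abs_sub _ _).trans (add_le_add (hB _ ⟨hlt.le, le_rfl⟩) (hB _ ⟨le_rfl, hlt.le⟩))

lemma abs_deriv_le_mul_rpow {G c t : ℝ} (ha : 0 ≤ a) (hα : 0 ≤ α)
    (h₁ : ∀ y ∈ Ioo α (α + ℓ), HasDerivAt g₁ (g₂ y) y)
    (h₂ : ∀ y ∈ Ioo α (α + ℓ), |g₂ y + a / y * g₁ y| ≤ Q) (hc : c ∈ Ioo α (α + ℓ))
    (hG : |g₁ c| ≤ G) (ht : t ∈ Ioo 0 ℓ) : |g₁ (α + t)| ≤ (G + Q * ℓ) * (ℓ / t) ^ a := by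
  have hy : α + t ∈ Ioo α (α + ℓ) := ⟨by linarith [ht.1], by linarith [ht.2]⟩
  have hy₀ : 0 < α + t := hα.trans_lt hy.1
  have hc₀ : 0 ≤ c := hα.trans hc.1.le
  have hQ : 0 ≤ Q := (abs_nonneg _).trans (h₂ c hc)
  have hY : 0 ≤ (α + ℓ) ^ a := Real.rpow_nonneg (hy₀.le.trans hy.2.le) a
  have hflux_c : |c ^ a * g₁ c| ≤ (α + ℓ) ^ a * G := by
    rw [abs_mul, abs_of_nonneg (Real.rpow_nonneg hc₀ a)]
    exact mul_le_mul (Real.rpow_le_rpow hc₀ hc.2.le ha) hG (abs_nonneg _) hY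
  have hdist : |α + t - c| ≤ ℓ := by
    rw [abs_le]
    constructor <;> linarith [hc.1, hc.2, ht.1, ht.2]
  have hflux : (α + t) ^ a * |g₁ (α + t)| ≤ (α + ℓ) ^ a * (G + Q * ℓ) := by
    rw [← abs_of_nonneg (Real.rpow_nonneg hy₀.le a), ← abs_mul]
    have hdiff := (abs_rpow_mul_sub_rpow_mul_le ha hα h₁ h₂ hc hy hc.2.le hy.2.le).trans
      (mul_le_mul_of_nonneg_left hdist (mul_nonneg hQ hY))
    linarith [abs_sub_abs_le_abs_sub ((α + t) ^ a * g₁ (α + t)) (c ^ a * g₁ c)]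
  have hratio : (α + ℓ) / (α + t) ≤ ℓ / t := by
    rw [div_le_div_iff₀ hy₀ ht.1]
    nlinarith [ht.2]
  calc |g₁ (α + t)| ≤ (α + ℓ) ^ a * (G + Q * ℓ) / (α + t) ^ a := by
        rwa [le_div_iff₀' (Real.rpow_pos_of_pos hy₀ a)]
    _ = (G + Q * ℓ) * ((α + ℓ) / (α + t)) ^ a := by
        rw [Real.div_rpow (hy₀.le.trans hy.2.le) hy₀.le]
        ring
    _ ≤ (G + Q * ℓ) * (ℓ / t) ^ a := by
        have hG₀ : 0 ≤ G := (abs_nonneg _).trans hG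
        have hℓ : 0 < ℓ := ht.1.trans ht.2
        gcongr

lemma abs_sub_le_rpow_of_abs_ode_le {B t : ℝ} (ha : a ∈ Ico 0 1) (hα : 0 ≤ α) (hℓ : 0 < ℓ)
    (hg : ContinuousOn g (Icc α (α + ℓ))) (h₀ : ∀ y ∈ Ioo α (α + ℓ), HasDerivAt g (g₁ y) y)
    (h₁ : ∀ y ∈ Ioo α (α + ℓ), HasDerivAt g₁ (g₂ y) y)
    (h₂ : ∀ y ∈ Ioo α (α + ℓ), |g₂ y + a / y * g₁ y| ≤ Q)
    (hB : ∀ y ∈ Icc α (α + ℓ), |g y| ≤ B) (ht : t ∈ Icc 0 ℓ) :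
    |g (α + t) - g α| ≤ (2 * B + Q * ℓ ^ 2) / (1 - a) * (t / ℓ) ^ (1 - a) := by
  obtain ⟨c, hc, hgc⟩ := exists_abs_deriv_le hℓ hg h₀ hB
  have hderiv (t : ℝ) (ht : t ∈ Ioo 0 ℓ) :
      |g₁ (α + t)| ≤ (2 * B / ℓ + Q * ℓ) * ℓ ^ a * t ^ (1 - a - 1) := by
    refine (abs_deriv_le_mul_rpow ha.1 hα h₁ h₂ hc hgc ht).trans_eq ?_
    rw [sub_sub_cancel_left, Real.rpow_neg ht.1.le, Real.div_rpow hℓ.le ht.1.le]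
    ring
  have hint := abs_sub_le_of_abs_deriv_le_rpow (g := fun t => g (α + t)) (sub_pos.2 ha.2)
    (hg.comp (by fun_prop) fun t ht => ⟨by linarith [ht.1], by linarith [ht.2]⟩)
    (fun t ht => (h₀ (α + t) ⟨by linarith [ht.1], by linarith [ht.2]⟩).comp_const_add α t)
    hderiv ht
  rw [add_zero] at hint
  refine hint.trans_eq ?_
  have hℓa : ℓ ^ a = ℓ / ℓ ^ (1 - a) := by
    rw [Real.rpow_sub hℓ, Real.rpow_one, div_div_cancel₀ hℓ.ne']
  rw [Real.div_rpow ht.1 hℓ.le, hℓa]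
  field_simp

lemma exists_abs_rpow_mul_sub_le (ha : 0 ≤ a) (hY : 0 < Y)
    (h₁ : ∀ y ∈ Ioo 0 Y, HasDerivAt g₁ (g₂ y) y)
    (h₂ : ∀ y ∈ Ioo 0 Y, |g₂ y + a / y * g₁ y| ≤ Q) :
    ∃ P, ∀ y ∈ Ioo 0 Y, |y ^ a * g₁ y - P| ≤ Q * y ^ a * y := by
  have hmid : Y / 2 ∈ Ioo 0 Y := ⟨half_pos hY, half_lt_self hY⟩
  have hQ : 0 ≤ Q := (abs_nonneg _).trans (h₂ _ hmid)
  have hlip : LipschitzOnWith (Q * Y ^ a).toNNReal (fun y => y ^ a * g₁ y) (Ioo 0 Y) := by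
    refine LipschitzOnWith.of_dist_le_mul fun z hz y hy => ?_
    rw [Real.coe_toNNReal _ (mul_nonneg hQ (Real.rpow_nonneg hY.le a)), Real.dist_eq, Real.dist_eq]
    exact abs_rpow_mul_sub_rpow_mul_le ha le_rfl h₁ h₂ hy hz hy.2.le hz.2.le
  obtain ⟨P, hP, hext⟩ := hlip.extend_real
  refine ⟨P 0, fun y hy => ?_⟩
  have hlim : Tendsto (fun z => |y ^ a * g₁ y - P z|) (𝓝[>] 0) (𝓝 |y ^ a * g₁ y - P 0|) :=
    ((continuous_const.sub hP.continuous).abs.tendsto 0).mono_left nhdsWithin_le_nhds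
  refine le_of_tendsto hlim ?_
  filter_upwards [Ioo_mem_nhdsGT hy.1] with z hz
  have hzY : z ∈ Ioo 0 Y := ⟨hz.1, hz.2.trans hy.2⟩
  rw [← hext hzY]
  refine (abs_rpow_mul_sub_rpow_mul_le ha le_rfl h₁ h₂ hzY hy hz.2.le le_rfl).trans ?_
  rw [abs_of_pos (sub_pos.2 hz.2)]
  have hya : 0 ≤ y ^ a := Real.rpow_nonneg hy.1.le a
  gcongr
  exact sub_le_self y hz.1.le

lemma exists_abs_sub_mul_rpow_le (ha : a ∈ Ico 0 1) (hY : 0 < Y) (hg : ContinuousOn g (Ico 0 Y))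
    (h₀ : ∀ y ∈ Ioo 0 Y, HasDerivAt g (g₁ y) y) (h₁ : ∀ y ∈ Ioo 0 Y, HasDerivAt g₁ (g₂ y) y)
    (h₂ : ∀ y ∈ Ioo 0 Y, |g₂ y + a / y * g₁ y| ≤ Q) :
    ∃ D, ∀ y ∈ Ioo 0 Y, |g y - g 0 - D * y ^ (1 - a)| ≤ Q / 2 * y ^ 2 := by
  have hb : 0 < 1 - a := sub_pos.2 ha.2
  obtain ⟨P, hP⟩ := exists_abs_rpow_mul_sub_le ha.1 hY h₁ h₂
  refine ⟨P / (1 - a), fun y hy => ?_⟩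
  have hint := abs_sub_le_of_abs_deriv_le_rpow (g := fun y => g y - P / (1 - a) * y ^ (1 - a))
    (b := 2) (c := Q) zero_lt_two
    ((hg.mono fun x hx => ⟨hx.1, hx.2.trans_lt hy.2⟩).sub
      ((Real.continuous_rpow_const hb.le).const_mul _).continuousOn)
    (fun x hx => (h₀ x ⟨hx.1, hx.2.trans hy.2⟩).sub
      ((Real.hasDerivAt_rpow_const (Or.inl hx.1.ne')).const_mul _)) ?_ ⟨hy.1.le, le_rfl⟩
  · simpa [Real.zero_rpow hb.ne', sub_right_comm] using hint
  · intro x hx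
    have hxa : 0 < x ^ a := Real.rpow_pos_of_pos hx.1 a
    have hfactor : g₁ x - P / (1 - a) * ((1 - a) * x ^ (1 - a - 1)) =
        (x ^ a * g₁ x - P) / x ^ a := by
      rw [sub_sub_cancel_left, Real.rpow_neg hx.1.le]
      field_simp
    rw [hfactor, abs_div, abs_of_pos hxa, div_le_iff₀ hxa]
    refine (hP x ⟨hx.1, hx.2.trans hy.2⟩).trans_eq ?_
    norm_num
    ring

end NormalEquation

/-! ### The barrier `|X| + B (ρ^a y^(1-a) - y)` -/

section Barrier

variable {a ρ N : ℝ} {X₀ Z : En n × ℝ}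

lemma hasALapAt_euclNorm_sub (hX₀ : X₀.2 = 0) (hZ : 0 < Z.2) (a : ℝ) :
    HasALapAt a (fun X => euclNorm (X - X₀)) ((n + a) / euclNorm (Z - X₀)) Z := by
  set r := euclNorm (Z - X₀) with hr
  have hZ₂ : coord none (Z - X₀) = Z.2 := by simp [coord, hX₀]
  have hr₀ : 0 < r := by
    refine hZ.trans_le ((le_abs_self _).trans (le_of_eq_of_le ?_ (abs_snd_le_euclNorm (Z - X₀))))
    simp [hX₀]
  have hroot : HasDeriv2At (fun t => t ^ (1 / 2 : ℝ)) (1 / (2 * r)) (-1 / (4 * r ^ 3)) (r ^ 2) := by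
    have hpow (p : ℝ) : (r ^ 2) ^ p = r ^ (2 * p) := by
      rw [Real.rpow_mul hr₀.le, Real.rpow_two]
    refine (HasDeriv2At.rpow_const (1 / 2) (pow_pos hr₀ 2)).congr_deriv ?_ ?_
    · rw [hpow, show 2 * ((1 / 2 : ℝ) - 1) = -1 by norm_num, Real.rpow_neg_one]
      field_simp
    · rw [hpow, show 2 * ((1 / 2 : ℝ) - 2) = -(3 : ℕ) by norm_num, Real.rpow_neg hr₀.le,
        Real.rpow_natCast]
      field_simp
      norm_num
  have hsqrt : (fun X => euclNorm (X - X₀)) = fun X => (euclNorm (X - X₀) ^ 2) ^ (1 / 2 : ℝ) := by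
    ext X
    rw [← Real.sqrt_eq_rpow, Real.sqrt_sq (euclNorm_nonneg _)]
  rw [hsqrt]
  refine (((HasCoordDeriv2At.euclNorm_sub_sq X₀ Z).comp hroot).hasALapAt a).congr_val ?_
  simp only [mul_pow, Finset.sum_add_distrib, ← Finset.mul_sum, ← euclNorm_sq_eq_sum, ← hr, hZ₂,
    Finset.sum_const, Finset.card_univ, Fintype.card_option, Fintype.card_fin, nsmul_eq_mul]
  push_cast
  field_simp
  ring

/-- A supersolution which is comparable to the distance from the trace point `X₀` within distance
`ρ` of it, but has the size `y^(1-a)` on the vertical line over `X₀`. -/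
def barrier (a ρ : ℝ) (X₀ X : En n × ℝ) : ℝ :=
  euclNorm (X - X₀) + (n + a) / a * (ρ ^ a * X.2 ^ (1 - a) - X.2)

lemma exists_hasALapAt_barrier_nonpos (ha : 0 < a) (ρ : ℝ) (hX₀ : X₀.2 = 0) (hZ : 0 < Z.2) :
    ∃ L ≤ 0, HasALapAt a (barrier a ρ X₀) L Z := by
  have hpow : HasALapAt a (fun X : En n × ℝ => X.2 ^ (1 - a)) 0 Z := by
    refine (HasALapAt.comp_snd (.rpow_const (1 - a) hZ)).congr_val ?_
    rw [show 1 - a - 2 = 1 - a - 1 - 1 by ring, Real.rpow_sub_one hZ.ne' (1 - a - 1)]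
    field_simp
    ring
  refine ⟨_, ?_, (hasALapAt_euclNorm_sub hX₀ hZ a).add
    (((hpow.const_mul _).sub (.comp_snd .id)).const_mul _)⟩
  have hle : Z.2 ≤ euclNorm (Z - X₀) := by
    simpa [hX₀] using (le_abs_self _).trans (abs_snd_le_euclNorm (Z - X₀))
  have hdiv : (n + a) / euclNorm (Z - X₀) ≤ (n + a) / Z.2 := by gcongr
  have hB : (n + a) / a * (a / Z.2) = (n + a) / Z.2 := by field_simp
  linear_combination hdiv - hB

lemma euclNorm_le_barrier (ha : a ∈ Ioo 0 1) (hZ : Z.2 ∈ Icc 0 ρ) :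
    euclNorm (Z - X₀) ≤ barrier a ρ X₀ Z := by
  have hpow : Z.2 ≤ ρ ^ a * Z.2 ^ (1 - a) := by
    calc Z.2 = Z.2 ^ a * Z.2 ^ (1 - a) := by
          rw [← Real.rpow_add_of_nonneg hZ.1 ha.1.le (sub_nonneg.2 ha.2.le), add_sub_cancel,
            Real.rpow_one]
      _ ≤ ρ ^ a * Z.2 ^ (1 - a) := by
          have := Real.rpow_nonneg hZ.1 (1 - a)
          gcongr
          exacts [hZ.1, ha.1.le, hZ.2]
  have hB : 0 ≤ (n + a) / a := div_nonneg (add_nonneg n.cast_nonneg ha.1.le) ha.1.le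
  exact le_add_of_nonneg_right (mul_nonneg hB (sub_nonneg.2 hpow))

lemma barrier_add_normal_le (ha : 0 < a) (ρ : ℝ) (hX₀ : X₀.2 = 0) {y : ℝ} (hy : 0 ≤ y) :
    barrier a ρ X₀ (X₀ + (0, y)) ≤ (n + a) / a * ρ ^ a * y ^ (1 - a) := by
  have hB : 1 ≤ (n + a) / a := (one_le_div ha).2 (le_add_of_nonneg_left n.cast_nonneg)
  simp only [barrier, add_sub_cancel_left, euclNorm_normal, abs_of_nonneg hy, Prod.snd_add, hX₀,
    zero_add]
  linear_combination mul_le_mul_of_nonneg_right hB hy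

lemma continuous_barrier (ha : a ≤ 1) (ρ : ℝ) (X₀ : En n × ℝ) : Continuous (barrier a ρ X₀) := by
  have := (Real.continuous_rpow_const (sub_nonneg.2 ha)).comp (continuous_snd (X := En n))
  unfold barrier
  fun_prop

theorem abs_sub_le_mul_rpow_of_abs_sub_le_mul_euclNorm {w : En n × ℝ → ℝ} {y : ℝ}
    (ha : a ∈ Ioo 0 1) (hX₀ : X₀.2 = 0) (hw : ContinuousOn w (upperClosedBall X₀ ρ))
    (hL : ∀ Z ∈ upperBall X₀ ρ, HasALapAt a w 0 Z) (hN : 0 ≤ N)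
    (hB : ∀ Z ∈ upperClosedBall X₀ ρ \ upperBall X₀ ρ, |w Z - w X₀| ≤ N * euclNorm (Z - X₀))
    (hy : y ∈ Icc 0 ρ) :
    |w (X₀ + (0, y)) - w X₀| ≤ N * ((n + a) / a * ρ ^ a * y ^ (1 - a)) := by
  have hone (σ : ℝ) (hσ : |σ| = 1) :
      σ * w (X₀ + (0, y)) - N * barrier a ρ X₀ (X₀ + (0, y)) ≤ σ * w X₀ := by
    refine le_of_hasALapAt_nonneg (a := a) (by linarith [ha.1]) (isCompact_upperClosedBall X₀ ρ)
      (isOpen_upperBall X₀ ρ) (upperBall_subset_upperClosedBall X₀ ρ) (fun _ hZ => hZ.1)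
      (Φ := fun Z => σ * w Z - N * barrier a ρ X₀ Z)
      ((hw.const_mul σ).sub ((continuous_barrier ha.2.le ρ X₀).continuousOn.const_mul N))
      (fun Z hZ => ?_) (fun Z hZ => ?_) ⟨by simp [hX₀, hy.1], by simp [abs_of_nonneg hy.1, hy.2]⟩
    · obtain ⟨L, hL₀, hb⟩ := exists_hasALapAt_barrier_nonpos ha.1 ρ hX₀ hZ.1
      exact ⟨_, by simpa using mul_nonpos_of_nonneg_of_nonpos hN hL₀,
        ((hL Z hZ).const_mul σ).sub (hb.const_mul N)⟩
    · have hZρ : Z.2 ≤ ρ := by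
        simpa [hX₀] using ((le_abs_self _).trans (abs_snd_le_euclNorm (Z - X₀))).trans hZ.1.2
      have hle := (le_abs_self _).trans_eq ((abs_mul σ (w Z - w X₀)).trans (by rw [hσ, one_mul]))
      have hbar := mul_le_mul_of_nonneg_left (euclNorm_le_barrier (X₀ := X₀) ha ⟨hZ.1.1, hZρ⟩) hN
      linarith [hB Z hZ]
  have hbar := mul_le_mul_of_nonneg_left (barrier_add_normal_le ha.1 ρ hX₀ hy.1) hN
  rw [abs_le]
  constructor
  · linarith [hone (-1) (by simp)]
  · linarith [hone 1 (by simp)]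

end Barrier

/-! ### Estimates on half balls -/

lemma tangentialDiff_tangentialDiff (h k : En n) (u : En n × ℝ → ℝ) (X : En n × ℝ) :
    tangentialDiff k (tangentialDiff h u) X =
      u (X + (k, 0) + (h, 0)) - u (X + (k, 0)) - (u (X + (h, 0)) - u X) :=
  rfl

lemma hasDerivAt_normal {u : En n × ℝ → ℝ} {x : En n} {y : ℝ}
    (hu : DifferentiableAt ℝ u (x, y)) :
    HasDerivAt (fun t => u (x, t)) (fderiv ℝ u (x, y) (0, 1)) y :=
  hu.hasFDerivAt.comp_hasDerivAt y ((hasDerivAt_const y x).prodMk (hasDerivAt_id y))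

/-- On the half ball of radius `R` about `X₀`, the function `u` is `a`-harmonic and bounded by `K`,
and its trace is `C^{1,1}`, with the constants `K / R` and `K / R²` dictated by scaling; regularity
of the trace is encoded by its first and second differences. -/
structure IsControlledOn (a : ℝ) (u : En n × ℝ → ℝ) (X₀ : En n × ℝ) (R K : ℝ) : Prop where
  radius_pos : 0 < R
  snd_nonneg : 0 ≤ X₀.2
  continuousOn : ContinuousOn u (upperClosedBall X₀ R)
  isAHarmonicOn : IsAHarmonicOn a u (upperBall X₀ R)
  abs_le : ∀ X ∈ upperClosedBall X₀ R, |u X| ≤ K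
  trace_first : ∀ h, ∀ Z ∈ upperClosedBall X₀ R, Z.2 = 0 → Z + (h, 0) ∈ upperClosedBall X₀ R →
    |tangentialDiff h u Z| ≤ K / R * ‖h‖
  trace_second : ∀ h k, ∀ Z ∈ upperClosedBall X₀ R, Z.2 = 0 →
    Z + (h, 0) ∈ upperClosedBall X₀ R → Z + (k, 0) ∈ upperClosedBall X₀ R →
    Z + (k, 0) + (h, 0) ∈ upperClosedBall X₀ R →
    |tangentialDiff k (tangentialDiff h u) Z| ≤ K / R ^ 2 * ‖h‖ * ‖k‖

namespace IsControlledOn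

variable {a R K : ℝ} {u : En n × ℝ → ℝ} {X₀ X : En n × ℝ} {h k : En n}

lemma bound_nonneg (hu : IsControlledOn a u X₀ R K) : 0 ≤ K :=
  (abs_nonneg _).trans (hu.abs_le X₀ (mem_upperClosedBall_self hu.snd_nonneg hu.radius_pos.le))

lemma abs_tangentialDiff_le (hu : IsControlledOn a u X₀ R K) (ha : a ∈ Icc 0 1)
    (hX : X ∈ upperClosedBall X₀ (R / 2)) (hh : ‖h‖ ≤ R / 4) :
    |tangentialDiff h u X| ≤ 5 * (n + 4) * (K / R) * ‖h‖ := by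
  have hR := hu.radius_pos
  have hK := hu.bound_nonneg
  have hsub := upperClosedBall_subset (s := 2 * (R / 4)) hX (R := R) (by linarith)
  have hsub' := upperClosedBall_subset (s := R / 4) hX (R := R) (by linarith)
  have hdiff := abs_tangentialDiff_le_of_isAHarmonicOn ha (by linarith : 0 < R / 4) hX.1 hh
    (hu.continuousOn.mono hsub) (hu.isAHarmonicOn.mono (upperBall_subset hX (by linarith)))
    (fun Z hZ => hu.abs_le Z (hsub hZ)) (by positivity)
    (fun Z hZ hZ₂ => hu.trace_first h Z (hsub' hZ) hZ₂
      (hsub (add_tangential_mem_upperClosedBall hh hZ)))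
  refine hdiff.trans (mul_le_mul_of_nonneg_right ?_ (norm_nonneg h))
  have hKR : 0 ≤ n * (K / R) := by positivity
  have hKR' : 0 ≤ K / R := by positivity
  rw [← div_mul_eq_mul_div, div_div_eq_mul_div]
  linear_combination hKR + 3 * hKR'

lemma abs_tangentialDiff_tangentialDiff_le (hu : IsControlledOn a u X₀ R K) (ha : a ∈ Icc 0 1)
    (hX : X ∈ upperClosedBall X₀ (R / 4)) (hh : ‖h‖ ≤ R / 4) (hk : ‖k‖ ≤ R / 8) :
    |tangentialDiff k (tangentialDiff h u) X| ≤ 41 * (n + 4) ^ 2 * (K / R ^ 2) * ‖h‖ * ‖k‖ := by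
  have hR := hu.radius_pos
  have hK := hu.bound_nonneg
  have hsub : upperClosedBall X (2 * (R / 8)) ⊆ upperClosedBall X₀ (R / 2) :=
    upperClosedBall_subset hX (by linarith)
  have hmem {Z} (hZ : Z ∈ upperClosedBall X₀ (R / 2)) : Z ∈ upperClosedBall X₀ R :=
    upperClosedBall_mono X₀ (half_le_self hR.le) hZ
  have hshift {Z} (hZ : Z ∈ upperClosedBall X₀ (R / 2)) : Z + (h, 0) ∈ upperClosedBall X₀ R :=
    upperClosedBall_add_mem hZ le_rfl (by rw [euclNorm_tangential]; linarith)
  have hcont : ContinuousOn (tangentialDiff h u) (upperClosedBall X (2 * (R / 8))) :=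
    (hu.continuousOn.comp (by fun_prop) fun Z hZ => hshift (hsub hZ)).sub
      (hu.continuousOn.mono fun Z hZ => hmem (hsub hZ))
  have hharm : IsAHarmonicOn a (tangentialDiff h u) (upperBall X (2 * (R / 8))) :=
    hu.isAHarmonicOn.tangentialDiff (isOpen_upperBall X₀ R) (upperBall_subset hX (by linarith))
      fun Z hZ => upperBall_add_mem (r := R / 2) (upperBall_subset hX (by linarith) hZ) le_rfl
        (by rw [euclNorm_tangential]; linarith)
  have hdiff := abs_tangentialDiff_le_of_isAHarmonicOn ha (by linarith : 0 < R / 8) hX.1 hk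
    hcont hharm (fun Z hZ => hu.abs_tangentialDiff_le ha (hsub hZ) hh)
    (by positivity : 0 ≤ K / R ^ 2 * ‖h‖) (fun Z hZ hZ₂ => by
      have hZ' := hsub (upperClosedBall_mono X (by linarith) hZ)
      have hZk := hsub (add_tangential_mem_upperClosedBall hk hZ)
      exact hu.trace_second h k Z (hmem hZ') hZ₂ (hshift hZ') (hmem hZk) (hshift hZk))
  refine hdiff.trans (mul_le_mul_of_nonneg_right ?_ (norm_nonneg k))
  have hconst : 1 * (K / R ^ 2 * ‖h‖) ≤ (n + 4) ^ 2 * (K / R ^ 2 * ‖h‖) := by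
    gcongr
    nlinarith only [n.cast_nonneg (α := ℝ)]
  have hscale : (n + 4) * (5 * (n + 4) * (K / R) * ‖h‖) / (R / 8) =
      40 * (n + 4) ^ 2 * (K / R ^ 2 * ‖h‖) := by
    field_simp
    ring
  rw [hscale]
  linear_combination hconst

lemma contDiffAt (hu : IsControlledOn a u X₀ R K) (hX : X ∈ upperClosedBall X₀ (R / 4))
    (hX₂ : 0 < X.2) : ContDiffAt ℝ 2 u X :=
  hu.isAHarmonicOn.contDiffAt (isOpen_upperBall X₀ R)
    ⟨hX₂, hX.2.trans_lt (by linarith [hu.radius_pos])⟩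

lemma abs_D2_coordDir_some_le (hu : IsControlledOn a u X₀ R K) (ha : a ∈ Icc 0 1)
    (hX : X ∈ upperClosedBall X₀ (R / 4)) (hX₂ : 0 < X.2) (i : Fin n) :
    |D2 u X (coordDir (some i))| ≤ 41 * (n + 4) ^ 2 * (K / R ^ 2) := by
  have hR := hu.radius_pos
  have hK := hu.bound_nonneg
  refine (hasDeriv2At_line (hu.contDiffAt hX hX₂) (coordDir (some i))).abs_le (by positivity) ?_
  have hsmul (t : ℝ) : t • coordDir (some i) = (t • EuclideanSpace.single i (1 : ℝ), (0 : ℝ)) := by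
    simp [coordDir]
  have hnorm (t : ℝ) : ‖t • EuclideanSpace.single i (1 : ℝ)‖ = |t| := by simp [norm_smul]
  filter_upwards [Metric.closedBall_mem_nhds 0 (by linarith : 0 < R / 8)] with q hq
  have hq₁ : |q.1| ≤ R / 8 := (norm_fst_le q).trans (mem_closedBall_zero_iff.1 hq)
  have hq₂ : |q.2| ≤ R / 8 := (norm_snd_le q).trans (mem_closedBall_zero_iff.1 hq)
  have hdiff := hu.abs_tangentialDiff_tangentialDiff_le ha hX
    (h := q.2 • EuclideanSpace.single i (1 : ℝ)) (k := q.1 • EuclideanSpace.single i (1 : ℝ))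
    (by rw [hnorm]; linarith) (by rwa [hnorm])
  rw [hnorm, hnorm, mul_right_comm, tangentialDiff_tangentialDiff, ← hsmul, ← hsmul] at hdiff
  simpa [add_smul, add_assoc] using hdiff

lemma abs_normal_operator_le (hu : IsControlledOn a u X₀ R K) (ha : a ∈ Icc 0 1)
    (hX : X ∈ upperClosedBall X₀ (R / 4)) (hX₂ : 0 < X.2) :
    |D2 u X (0, 1) + a / X.2 * fderiv ℝ u X (0, 1)| ≤ n * (41 * (n + 4) ^ 2 * (K / R ^ 2)) := by
  have heq := hu.isAHarmonicOn.2 X ⟨hX₂, hX.2.trans_lt (by linarith [hu.radius_pos])⟩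
  have hsum : D2 u X (0, 1) + a / X.2 * fderiv ℝ u X (0, 1) =
      -∑ i : Fin n, D2 u X (coordDir (some i)) :=
    eq_neg_of_add_eq_zero_right ((add_assoc _ _ _).symm.trans heq)
  rw [hsum, abs_neg]
  refine (Finset.abs_sum_le_sum_abs _ _).trans ?_
  refine (Finset.sum_le_card_nsmul _ _ _ fun i _ => hu.abs_D2_coordDir_some_le ha hX hX₂ i).trans ?_
  simp

lemma mk_mem_upperClosedBall (hX₀ : 0 ≤ X₀.2) {y : ℝ} (hy : y ∈ Icc X₀.2 (X₀.2 + R)) :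
    (X₀.1, y) ∈ upperClosedBall X₀ R := by
  refine ⟨hX₀.trans hy.1, ?_⟩
  have hdiff : (X₀.1, y) - X₀ = (0, y - X₀.2) := Prod.ext (sub_self _) rfl
  rw [hdiff, euclNorm_normal, abs_of_nonneg (sub_nonneg.2 hy.1)]
  linarith [hy.2]

lemma abs_add_normal_sub_le (hu : IsControlledOn a u X₀ R K) (ha : a ∈ Ico 0 1) {t : ℝ}
    (ht : t ∈ Icc 0 (R / 4)) :
    |u (X₀ + (0, t)) - u X₀| ≤
      (2 + 3 * n * (n + 4) ^ 2) / (1 - a) * (4 * (t / R)) ^ (1 - a) * K := by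
  have hR := hu.radius_pos
  have hmem {y : ℝ} (hy : y ∈ Icc X₀.2 (X₀.2 + R / 4)) := mk_mem_upperClosedBall hu.snd_nonneg hy
  have hball : upperClosedBall X₀ (R / 4) ⊆ upperClosedBall X₀ R :=
    upperClosedBall_mono X₀ (by linarith)
  have hpos {y : ℝ} (hy : y ∈ Ioo X₀.2 (X₀.2 + R / 4)) : 0 < y := hu.snd_nonneg.trans_lt hy.1
  have hdiff {y : ℝ} (hy : y ∈ Ioo X₀.2 (X₀.2 + R / 4)) : ContDiffAt ℝ 2 u (X₀.1, y) :=
    hu.contDiffAt (hmem (Ioo_subset_Icc_self hy)) (hpos hy)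
  have hode := abs_sub_le_rpow_of_abs_ode_le (g := fun y => u (X₀.1, y)) ha hu.snd_nonneg
    (by linarith : 0 < R / 4)
    (hu.continuousOn.comp (by fun_prop) fun y hy => hball (hmem hy))
    (fun y hy => hasDerivAt_normal ((hdiff hy).differentiableAt two_ne_zero))
    (fun y hy => hasDerivAt_normal (differentiableAt_fderiv_apply (hdiff hy) (0, 1)))
    (fun y hy => hu.abs_normal_operator_le ⟨ha.1, ha.2.le⟩ (hmem (Ioo_subset_Icc_self hy))
      (hpos hy))
    (fun y hy => hu.abs_le _ (hball (hmem hy))) ht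
  have hX₀ : X₀ + (0, t) = (X₀.1, X₀.2 + t) := Prod.ext (add_zero _) rfl
  rw [hX₀]
  refine hode.trans ?_
  have hconst : 2 * K + n * (41 * (n + 4) ^ 2 * (K / R ^ 2)) * (R / 4) ^ 2 ≤
      (2 + 3 * n * (n + 4) ^ 2) * K := by
    have hn : 0 ≤ n * (n + 4 : ℝ) ^ 2 * K :=
      mul_nonneg (by positivity) hu.bound_nonneg
    field_simp
    linarith
  have hb : 0 ≤ 1 - a := by linarith [ha.2]
  have ht₀ : 0 ≤ 4 * (t / R) := mul_nonneg zero_le_four (div_nonneg ht.1 hR.le)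
  rw [show t / (R / 4) = 4 * (t / R) by field_simp]
  have hfactor : 0 ≤ (4 * (t / R)) ^ (1 - a) / (1 - a) := div_nonneg (Real.rpow_nonneg ht₀ _) hb
  linear_combination mul_le_mul_of_nonneg_right hconst hfactor

theorem exists_abs_sub_mul_rpow_le (hu : IsControlledOn a u 0 R K) (ha : a ∈ Ico 0 1) :
    ∃ D, ∀ y ∈ Ioo 0 (R / 4), |u (0, y) - u (0, 0) - D * y ^ (1 - a)| ≤
      n * (41 * (n + 4) ^ 2 * (K / R ^ 2)) / 2 * y ^ 2 := by
  have hR := hu.radius_pos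
  have hmem {y : ℝ} (hy : y ∈ Icc 0 (R / 4)) : (0, y) ∈ upperClosedBall (0 : En n × ℝ) (R / 4) :=
    mk_mem_upperClosedBall le_rfl (by simpa using hy)
  have hdiff {y : ℝ} (hy : y ∈ Ioo 0 (R / 4)) : ContDiffAt ℝ 2 u (0, y) :=
    hu.contDiffAt (hmem (Ioo_subset_Icc_self hy)) hy.1
  exact _root_.exists_abs_sub_mul_rpow_le (g := fun y => u (0, y)) ha (by linarith)
    (hu.continuousOn.comp (by fun_prop) fun y hy =>
      upperClosedBall_mono 0 (by linarith) (hmem (Ico_subset_Icc_self hy)))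
    (fun y hy => hasDerivAt_normal ((hdiff hy).differentiableAt two_ne_zero))
    (fun y hy => hasDerivAt_normal (differentiableAt_fderiv_apply (hdiff hy) (0, 1)))
    (fun y hy => hu.abs_normal_operator_le ⟨ha.1, ha.2.le⟩ (hmem (Ioo_subset_Icc_self hy)) hy.1)

theorem abs_tangentialDiff_add_normal_sub_le (hu : IsControlledOn a u X₀ R K) (ha : a ∈ Ioo 0 1)
    (hX₀ : X₀.2 = 0) (hh : ‖h‖ ≤ R / 4) {y : ℝ} (hy : y ∈ Icc 0 (R / 2)) :
    |tangentialDiff h u (X₀ + (0, y)) - tangentialDiff h u X₀| ≤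
      20 * (n + 4) * (K / R ^ 2) * ‖h‖ * ((n + a) / a * (R / 2) ^ a * y ^ (1 - a)) := by
  have hR := hu.radius_pos
  have hK := hu.bound_nonneg
  have haIcc : a ∈ Icc 0 1 := Ioo_subset_Icc_self ha
  have hball : upperClosedBall X₀ (R / 2) ⊆ upperClosedBall X₀ R :=
    upperClosedBall_mono X₀ (by linarith)
  have hshift {Z} (hZ : Z ∈ upperClosedBall X₀ (R / 2)) : Z + (h, 0) ∈ upperClosedBall X₀ R :=
    upperClosedBall_add_mem hZ le_rfl (by rw [euclNorm_tangential]; linarith)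
  have hX₀mem := mem_upperClosedBall_self hX₀.ge (half_pos hR).le
  have hharm : IsAHarmonicOn a (tangentialDiff h u) (upperBall X₀ (R / 2)) :=
    hu.isAHarmonicOn.tangentialDiff (isOpen_upperBall X₀ R)
      (upperBall_subset (mem_upperClosedBall_self hX₀.ge le_rfl) (by linarith))
      fun Z hZ => upperBall_add_mem hZ le_rfl (by rw [euclNorm_tangential]; linarith)
  refine abs_sub_le_mul_rpow_of_abs_sub_le_mul_euclNorm ha hX₀
    ((hu.continuousOn.comp (by fun_prop) fun Z => hshift).sub (hu.continuousOn.mono hball))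
    (fun Z => hharm.hasALapAt (isOpen_upperBall _ _)) (by positivity) ?_ hy
  rintro Z ⟨hZ, hZ'⟩
  rcases hZ.1.eq_or_lt with hZ₂ | hZ₂
  · have hZX₀ : Z = X₀ + (Z.1 - X₀.1, 0) := by
      ext <;> simp [hX₀, ← hZ₂]
    have hsecond := hu.trace_second h (Z.1 - X₀.1) X₀ (hball hX₀mem) hX₀ (hshift hX₀mem)
      (hZX₀ ▸ hball hZ) (hZX₀ ▸ hshift hZ)
    rw [tangentialDiff, ← hZX₀] at hsecond
    refine hsecond.trans (mul_le_mul ?_ (norm_fst_le_euclNorm (Z - X₀)) (norm_nonneg _) ?_)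
    · rw [mul_assoc]
      exact le_mul_of_one_le_left (by positivity) (by linarith [n.cast_nonneg (α := ℝ)])
    · positivity
  · have hZr : euclNorm (Z - X₀) = R / 2 := hZ.2.antisymm (not_lt.1 fun hlt => hZ' ⟨hZ₂, hlt⟩)
    rw [hZr]
    have h₁ := hu.abs_tangentialDiff_le haIcc hZ hh
    have h₂ := hu.abs_tangentialDiff_le haIcc hX₀mem hh
    refine (abs_sub _ _).trans ((add_le_add h₁ h₂).trans_eq ?_)
    field_simp
    ring

end IsControlledOn

/-! ### The interior sup bound -/

namespace IsControlledOn

variable {a : ℝ}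

theorem exists_forall_abs_sub_le (n : ℕ) (ha : a ∈ Ico 0 1) {δ : ℝ} (hδ : 0 < δ) :
    ∃ ε ∈ Ioo (0 : ℝ) (1 / 4), ∀ (u : En n × ℝ → ℝ) (X₀ : En n × ℝ) (R K : ℝ),
      IsControlledOn a u X₀ R K → ∀ X, X₀.2 ≤ X.2 → ‖X - X₀‖ ≤ ε * R → |u X - u X₀| ≤ δ * K := by
  set c : ℝ := (2 + 3 * n * (n + 4) ^ 2) / (1 - a)
  have hb : 0 < 1 - a := by linarith [ha.2]
  have hlim : Tendsto (fun ε : ℝ => c * (4 * ε) ^ (1 - a) + 5 * (n + 4) * ε) (𝓝[>] 0) (𝓝 0) := by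
    have hrpow := Real.continuous_rpow_const hb.le
    have hcont : Continuous fun ε : ℝ => c * (4 * ε) ^ (1 - a) + 5 * (n + 4) * ε := by fun_prop
    simpa [Real.zero_rpow hb.ne'] using (hcont.tendsto 0).mono_left nhdsWithin_le_nhds
  obtain ⟨ε, hεδ, hε⟩ := ((hlim.eventually (gt_mem_nhds hδ)).and
    (Ioo_mem_nhdsGT (by norm_num : (0 : ℝ) < 1 / 4))).exists
  refine ⟨ε, hε, fun u X₀ R K hu X hX hXR => ?_⟩
  have hR := hu.radius_pos
  have hK := hu.bound_nonneg
  have hεR : ε * R ≤ R / 4 := by nlinarith [hε.2]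
  set h := X.1 - X₀.1
  set t := X.2 - X₀.2
  have hh : ‖h‖ ≤ ε * R := (norm_fst_le (X - X₀)).trans hXR
  have ht₀ : 0 ≤ t := sub_nonneg.2 hX
  have ht : t ≤ ε * R := (le_abs_self t).trans ((norm_snd_le (X - X₀)).trans hXR)
  have hsplit : X = X₀ + (0, t) + (h, 0) := by ext <;> simp [h, t]
  have hmem : X₀ + (0, t) ∈ upperClosedBall X₀ (R / 2) :=
    upperClosedBall_add_mem (mem_upperClosedBall_self hu.snd_nonneg le_rfl) ht₀
      (by rw [euclNorm_normal, abs_of_nonneg ht₀]; linarith)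
  have hnormal : |u (X₀ + (0, t)) - u X₀| ≤ c * (4 * ε) ^ (1 - a) * K := by
    refine (hu.abs_add_normal_sub_le ha ⟨ht₀, ht.trans hεR⟩).trans ?_
    gcongr
    rwa [div_le_iff₀ hR]
  have htangential : |tangentialDiff h u (X₀ + (0, t))| ≤ 5 * (n + 4) * ε * K := by
    refine (hu.abs_tangentialDiff_le (Ico_subset_Icc_self ha) hmem (hh.trans hεR)).trans ?_
    calc 5 * (n + 4) * (K / R) * ‖h‖ ≤ 5 * (n + 4) * (K / R) * (ε * R) := by gcongr
      _ = 5 * (n + 4) * ε * K := by field_simp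
  calc |u X - u X₀| ≤ |tangentialDiff h u (X₀ + (0, t))| + |u (X₀ + (0, t)) - u X₀| := by
        rw [hsplit]
        exact abs_sub_le _ _ _
    _ ≤ 5 * (n + 4) * ε * K + c * (4 * ε) ^ (1 - a) * K := add_le_add htangential hnormal
    _ = (c * (4 * ε) ^ (1 - a) + 5 * (n + 4) * ε) * K := by ring
    _ ≤ δ * K := by gcongr

end IsControlledOn

lemma mem_halfBall {r : ℝ} (hr : 0 ≤ r) {X : En n × ℝ} :
    X ∈ halfBall n r ↔ 0 < X.2 ∧ euclNorm X < r := by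
  rw [halfBall, mem_ofPred_eq, ← euclNorm_sq, sq_lt_sq₀ (euclNorm_nonneg X) hr, and_comm]

lemma mem_halfBallWithBase {r : ℝ} (hr : 0 ≤ r) {X : En n × ℝ} :
    X ∈ halfBallWithBase n r ↔ 0 ≤ X.2 ∧ euclNorm X < r := by
  rw [halfBallWithBase, mem_ofPred_eq, ← euclNorm_sq, sq_lt_sq₀ (euclNorm_nonneg X) hr, and_comm]

lemma halfBall_eq_upperBall {r : ℝ} (hr : 0 ≤ r) : halfBall n r = upperBall 0 r := by
  ext X
  rw [mem_halfBall hr, upperBall, mem_ofPred_eq, sub_zero]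

lemma upperClosedBall_subset_halfBallWithBase {X₀ : En n × ℝ} {R r : ℝ} (hr : 0 ≤ r)
    (hR : euclNorm X₀ + R < r) : upperClosedBall X₀ R ⊆ halfBallWithBase n r := by
  refine fun X hX => (mem_halfBallWithBase hr).2 ⟨hX.1, ?_⟩
  have htri := euclNorm_add_le X₀ (X - X₀)
  rw [add_sub_cancel] at htri
  linarith [hX.2]

lemma upperBall_subset_halfBall {X₀ : En n × ℝ} {R r : ℝ} (hr : 0 ≤ r)
    (hR : euclNorm X₀ + R ≤ r) : upperBall X₀ R ⊆ halfBall n r := by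
  refine fun X hX => (mem_halfBall hr).2 ⟨hX.1, ?_⟩
  have htri := euclNorm_add_le X₀ (X - X₀)
  rw [add_sub_cancel] at htri
  linarith [hX.2]

/-- The weighted integral `∫ y^a u²` over the unit half ball. -/
def weightedEnergy (a : ℝ) (u : En n × ℝ → ℝ) : ℝ :=
  ∫ X in halfBall n 1, X.2 ^ a * u X ^ 2

lemma volume_real_ball_prod_Ioc (x : En n) {r b c : ℝ} (hr : 0 < r) (hbc : b ≤ c) :
    volume.real (Metric.ball x r ×ˢ Ioc b c) =
      r ^ n * volume.real (Metric.ball (0 : En n) 1) * (c - b) := by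
  rw [Measure.volume_eq_prod, measureReal_prod_prod, Real.volume_real_Ioc_of_le hbc,
    measureReal_def, Measure.addHaar_ball_of_pos _ _ hr, ENNReal.toReal_mul,
    ENNReal.toReal_ofReal (by positivity), finrank_euclideanSpace_fin, measureReal_def]

lemma le_weightedEnergy {a δ A : ℝ} {u : En n × ℝ → ℝ} {X₀ : En n × ℝ} (ha : a ≤ 1)
    (hint : IntegrableOn (fun X => X.2 ^ a * u X ^ 2) (halfBall n 1)) (hδ : 0 < δ)
    (hX₀ : 0 ≤ X₀.2) (hin : euclNorm X₀ + 2 * δ < 1) (hA : 0 ≤ A)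
    (hu : ∀ X, X₀.2 ≤ X.2 → ‖X - X₀‖ ≤ δ → A ≤ |u X|) :
    volume.real (Metric.ball (0 : En n) 1) / 4 * δ ^ (n + 2) * A ^ 2 ≤ weightedEnergy a u := by
  set S : Set (En n × ℝ) := Metric.ball X₀.1 δ ×ˢ Ioc (X₀.2 + δ / 2) (X₀.2 + δ)
  have hnear {X} (hX : X ∈ S) : X₀.2 ≤ X.2 ∧ ‖X - X₀‖ ≤ δ := by
    have hX₂ : 0 ≤ X.2 - X₀.2 := by linarith [hX.2.1]
    refine ⟨sub_nonneg.1 hX₂, max_le (mem_ball_iff_norm.1 hX.1).le ?_⟩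
    rw [Prod.snd_sub, Real.norm_of_nonneg hX₂]
    linarith [hX.2.2]
  have hsub : S ⊆ halfBall n 1 := by
    refine fun X hX => upperBall_subset_halfBall zero_le_one hin.le ⟨by linarith [hX.2.1], ?_⟩
    have htri := euclNorm_add_le ((X - X₀).1, 0) (0, (X - X₀).2)
    rw [Prod.mk_add_mk, add_zero, zero_add, euclNorm_tangential, euclNorm_normal] at htri
    have hfst : ‖(X - X₀).1‖ < δ := mem_ball_iff_norm.1 hX.1
    have hsnd : |(X - X₀).2| ≤ δ := (norm_snd_le _).trans (hnear hX).2
    linarith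
  have hlow : ∀ X ∈ S, δ / 2 * A ^ 2 ≤ X.2 ^ a * u X ^ 2 := by
    intro X hX
    have hX' := (mem_halfBall zero_le_one).1 (hsub hX)
    have hX₁ : X.2 ≤ 1 := (le_abs_self _).trans ((abs_snd_le_euclNorm X).trans hX'.2.le)
    have hpow : δ / 2 ≤ X.2 ^ a :=
      calc δ / 2 ≤ X.2 ^ (1 : ℝ) := by rw [Real.rpow_one]; linarith [hX.2.1]
        _ ≤ X.2 ^ a := Real.rpow_le_rpow_of_exponent_ge hX'.1 hX₁ ha
    rw [← sq_abs (u X)]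
    gcongr
    exacts [Real.rpow_nonneg hX'.1.le a, hu X (hnear hX).1 (hnear hX).2]
  have hvol : volume S ≠ ⊤ := by
    rw [Measure.volume_eq_prod, Measure.prod_prod, Real.volume_Ioc]
    exact ENNReal.mul_ne_top measure_ball_lt_top.ne ENNReal.ofReal_ne_top
  calc volume.real (Metric.ball (0 : En n) 1) / 4 * δ ^ (n + 2) * A ^ 2
      = δ / 2 * A ^ 2 * volume.real S := by
        rw [volume_real_ball_prod_Ioc X₀.1 hδ (by linarith)]
        ring
    _ ≤ ∫ X in S, X.2 ^ a * u X ^ 2 :=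
        setIntegral_ge_of_const_le_real (measurableSet_ball.prod measurableSet_Ioc) hvol hlow
          (hint.mono_set hsub)
    _ ≤ weightedEnergy a u := by
        refine setIntegral_mono_set hint ?_ hsub.eventuallyLE
        rw [halfBall_eq_upperBall zero_le_one]
        filter_upwards [ae_restrict_mem (isOpen_upperBall 0 1).measurableSet] with X hX
        exact mul_nonneg (Real.rpow_nonneg hX.1.le a) (sq_nonneg _)

lemma exists_pos_forall_mul_pow_mul_sq_le_weightedEnergy (n : ℕ) {a : ℝ} (ha : a ∈ Ico 0 1) {L : ℝ}
    (hL : 0 < L) : ∃ m > 0, ∀ (u : En n × ℝ → ℝ) (X₀ : En n × ℝ) (R : ℝ),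
      IsControlledOn a u X₀ R (L * |u X₀|) → euclNorm X₀ + R < 1 →
      IntegrableOn (fun X => X.2 ^ a * u X ^ 2) (halfBall n 1) →
      m * R ^ (n + 2) * u X₀ ^ 2 ≤ weightedEnergy a u := by
  obtain ⟨ε, hε, hosc⟩ := IsControlledOn.exists_forall_abs_sub_le n ha
    (by positivity : 0 < 1 / (2 * L))
  have hvol : 0 < volume.real (Metric.ball (0 : En n) 1) :=
    ENNReal.toReal_pos (Metric.measure_ball_pos _ _ one_pos).ne' measure_ball_lt_top.ne
  have hε₀ := hε.1
  refine ⟨volume.real (Metric.ball (0 : En n) 1) / 16 * ε ^ (n + 2), by positivity,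
    fun u X₀ R hu hXR hint => ?_⟩
  have hR := hu.radius_pos
  have hlow (X : En n × ℝ) (hX : X₀.2 ≤ X.2) (hXε : ‖X - X₀‖ ≤ ε * R) : |u X₀| / 2 ≤ |u X| := by
    have hdiff := hosc u X₀ R _ hu X hX hXε
    rw [show 1 / (2 * L) * (L * |u X₀|) = |u X₀| / 2 by field_simp, abs_sub_comm] at hdiff
    linarith [abs_sub_abs_le_abs_sub (u X₀) (u X)]
  have henergy := le_weightedEnergy ha.2.le hint (by positivity) hu.snd_nonneg
    (by nlinarith [hε.2]) (by positivity) hlow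
  refine le_of_eq_of_le ?_ henergy
  rw [div_pow, sq_abs, mul_pow]
  ring

/-- `u` satisfies the assumptions of the expansion, with one constant `M` for the `C^{1,1}`
seminorms of the trace and for the weighted `L²` norm; as in `IsControlledOn`, regularity of the
trace is encoded by differences. -/
structure HasDataBound (a : ℝ) (u : En n × ℝ → ℝ) (M : ℝ) : Prop where
  nonneg : 0 ≤ M
  continuousOn : ContinuousOn u (halfBallWithBase n 1)
  isAHarmonicOn : IsAHarmonicOn a u (halfBall n 1)
  integrableOn : IntegrableOn (fun X => X.2 ^ a * u X ^ 2) (halfBall n 1)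
  weightedEnergy_le : weightedEnergy a u ≤ M ^ 2
  trace_first : ∀ x h : En n, ‖x‖ < 1 → ‖x + h‖ < 1 → |u (x + h, 0) - u (x, 0)| ≤ M * ‖h‖
  trace_second : ∀ x h k : En n, ‖x‖ < 1 → ‖x + h‖ < 1 → ‖x + k‖ < 1 → ‖x + k + h‖ < 1 →
    |u (x + k + h, 0) - u (x + k, 0) - (u (x + h, 0) - u (x, 0))| ≤ M * ‖h‖ * ‖k‖

namespace HasDataBound

variable {a M : ℝ} {u : En n × ℝ → ℝ}

lemma isControlledOn (hu : HasDataBound a u M) {X₀ : En n × ℝ} {R K : ℝ} (hR : 0 < R)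
    (hX₀ : 0 ≤ X₀.2) (hXR : euclNorm X₀ + R < 1) (hMK : M ≤ K)
    (hK : ∀ X ∈ upperClosedBall X₀ R, |u X| ≤ K) : IsControlledOn a u X₀ R K := by
  have hsub := upperClosedBall_subset_halfBallWithBase zero_le_one hXR
  have hR₁ : R ≤ 1 := by linarith [euclNorm_nonneg X₀]
  have hK₀ : 0 ≤ K := hu.nonneg.trans hMK
  have htrace {x : En n} (hx : (x, 0) ∈ upperClosedBall X₀ R) : ‖x‖ < 1 := by
    simpa using ((mem_halfBallWithBase zero_le_one).1 (hsub hx)).2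
  refine ⟨hR, hX₀, hu.continuousOn.mono hsub,
    hu.isAHarmonicOn.mono (upperBall_subset_halfBall zero_le_one hXR.le), hK, ?_, ?_⟩
  · rintro h ⟨x, _⟩ hZ rfl hZh
    rw [Prod.mk_add_mk, add_zero] at hZh
    have hfirst := hu.trace_first x h (htrace hZ) (htrace hZh)
    rw [tangentialDiff, Prod.mk_add_mk, add_zero]
    refine hfirst.trans (mul_le_mul_of_nonneg_right ?_ (norm_nonneg h))
    exact hMK.trans (le_div_self hK₀ hR hR₁)
  · rintro h k ⟨x, _⟩ hZ rfl hZh hZk hZkh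
    simp only [Prod.mk_add_mk, add_zero] at hZh hZk hZkh
    have hsecond := hu.trace_second x h k (htrace hZ) (htrace hZh) (htrace hZk) (htrace hZkh)
    rw [tangentialDiff_tangentialDiff]
    simp only [Prod.mk_add_mk, add_zero]
    refine hsecond.trans ?_
    gcongr
    exact hMK.trans (le_div_self hK₀ (by positivity) (pow_le_one₀ hR.le hR₁))

end HasDataBound

lemma exists_forall_pow_mul_abs_le {ρ : ℝ} (hρ : 0 ≤ ρ) {u : En n × ℝ → ℝ}
    (hu : ContinuousOn u (upperClosedBall 0 ρ)) (k : ℕ) :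
    ∃ X₀ ∈ upperClosedBall 0 ρ,
      (∀ X ∈ upperClosedBall 0 ρ,
        (ρ - euclNorm X) ^ k * |u X| ≤ (ρ - euclNorm X₀) ^ k * |u X₀|) ∧
      (euclNorm X₀ < ρ →
        ∀ X ∈ upperClosedBall X₀ ((ρ - euclNorm X₀) / 2), |u X| ≤ 2 ^ k * |u X₀|) := by
  obtain ⟨X₀, hX₀, hmax⟩ := (isCompact_upperClosedBall 0 ρ).exists_isMaxOn
    ⟨0, mem_upperClosedBall_self le_rfl hρ⟩
    ((by fun_prop : ContinuousOn (fun X => (ρ - euclNorm X) ^ k) _).mul hu.abs)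
  refine ⟨X₀, hX₀, fun X hX => hmax hX, fun hlt X hX => ?_⟩
  set d := ρ - euclNorm X₀
  have hd : 0 < d := sub_pos.2 hlt
  have hXnorm : euclNorm X ≤ ρ - d / 2 := by
    have htri := euclNorm_add_le X₀ (X - X₀)
    rw [add_sub_cancel] at htri
    linarith [hX.2]
  have hle : (d / 2) ^ k * |u X| ≤ (d / 2) ^ k * (2 ^ k * |u X₀|) :=
    calc (d / 2) ^ k * |u X| ≤ (ρ - euclNorm X) ^ k * |u X| := by gcongr; linarith
      _ ≤ d ^ k * |u X₀| := hmax ⟨hX.1, by rw [sub_zero]; linarith⟩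
      _ = (d / 2) ^ k * (2 ^ k * |u X₀|) := by rw [div_pow]; field_simp
  exact le_of_mul_le_mul_left hle (by positivity)

lemma mul_le_sqrt_inv_mul_of_mul_sq_le {m q A M : ℝ} (hm : 0 < m) (hq : q ∈ Icc 0 1) (hM : 0 ≤ M)
    (h : m * q * A ^ 2 ≤ M ^ 2) : q * A ≤ √m⁻¹ * M := by
  refine le_of_sq_le_sq ?_ (by positivity)
  have hq₀ := hq.1
  calc (q * A) ^ 2 = m⁻¹ * (q * (m * q * A ^ 2)) := by field_simp
    _ ≤ m⁻¹ * (1 * M ^ 2) := by gcongr; exact hq.2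
    _ = (√m⁻¹ * M) ^ 2 := by rw [mul_pow, Real.sq_sqrt (by positivity), one_mul]

/-- At a maximum point `X₀` of `(9/10 - |X|)^(n+2) |u|`, either `|u X₀| ≤ M`, or `u` is controlled
by `|u X₀|` on a ball of radius comparable to `9/10 - |X₀|`, which forces energy near `X₀`. -/
theorem HasDataBound.exists_forall_abs_le (n : ℕ) {a : ℝ} (ha : a ∈ Ico 0 1) :
    ∃ C > 0, ∀ (u : En n × ℝ → ℝ) (M : ℝ), HasDataBound a u M →
      ∀ X ∈ upperClosedBall 0 (3 / 4), |u X| ≤ C * M := by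
  obtain ⟨m, hm, henergy⟩ := exists_pos_forall_mul_pow_mul_sq_le_weightedEnergy n ha
    (by positivity : (0 : ℝ) < 2 ^ (n + 2))
  set c : ℝ := 1 + √(m / 2 ^ (n + 2))⁻¹
  have hc : 1 ≤ c := le_add_of_nonneg_right (Real.sqrt_nonneg _)
  refine ⟨(20 / 3) ^ (n + 2) * c, by positivity, fun u M hu X hX => ?_⟩
  have hM := hu.nonneg
  obtain ⟨X₀, hX₀, hmax, hball⟩ := exists_forall_pow_mul_abs_le (by norm_num : (0 : ℝ) ≤ 9 / 10)
    (hu.continuousOn.mono (upperClosedBall_subset_halfBallWithBase zero_le_one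
      (by norm_num [euclNorm_zero]))) (n + 2)
  set d := 9 / 10 - euclNorm X₀ with hd_eq
  have hd : 0 ≤ d := by simpa [d] using hX₀.2
  have hd₁ : d ^ (n + 2) ≤ 1 := pow_le_one₀ hd (by linarith [euclNorm_nonneg X₀])
  have hX₀M : d ^ (n + 2) * |u X₀| ≤ c * M := by
    rcases le_total |u X₀| M with huM | hMu
    · exact mul_le_mul (hd₁.trans hc) huM (abs_nonneg _) (by positivity)
    rcases hd.eq_or_lt with hd₀ | hd₀
    · rw [← hd₀, zero_pow (by lia), zero_mul]
      positivity
    have hcontrol : IsControlledOn a u X₀ (d / 2) (2 ^ (n + 2) * |u X₀|) :=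
      hu.isControlledOn (by positivity) hX₀.1 (by linarith)
        (hMu.trans (le_mul_of_one_le_left (abs_nonneg _) (one_le_pow₀ one_le_two)))
        (hball (sub_pos.1 hd₀))
    have hle := (henergy u X₀ _ hcontrol (by linarith) hu.integrableOn).trans hu.weightedEnergy_le
    rw [div_pow, mul_div_left_comm, mul_comm _ (m / _), ← sq_abs] at hle
    exact (mul_le_sqrt_inv_mul_of_mul_sq_le (by positivity) ⟨by positivity, hd₁⟩ hM hle).trans
      (mul_le_mul_of_nonneg_right (le_add_of_nonneg_left zero_le_one) hM)
  have hX' : euclNorm X ≤ 3 / 4 := by simpa using hX.2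
  calc |u X| = (20 / 3) ^ (n + 2) * ((3 / 20) ^ (n + 2) * |u X|) := by
        rw [← mul_assoc, ← mul_pow]; norm_num
    _ ≤ (20 / 3) ^ (n + 2) * ((9 / 10 - euclNorm X) ^ (n + 2) * |u X|) := by gcongr; linarith
    _ ≤ (20 / 3) ^ (n + 2) * (d ^ (n + 2) * |u X₀|) := by
        refine mul_le_mul_of_nonneg_left ?_ (by positivity)
        exact hmax X (upperClosedBall_mono 0 (by norm_num) hX)
    _ ≤ (20 / 3) ^ (n + 2) * (c * M) := by gcongr
    _ = (20 / 3) ^ (n + 2) * c * M := by ring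

/-! ### The expansion -/

namespace IsControlledOn

variable {a R : ℝ}

lemma exists_interior_expansion (n : ℕ) (ha : a ∈ Ioo 0 1) (hR : 0 < R) :
    ∃ C > 0, ∀ (u : En n × ℝ → ℝ) (K : ℝ), IsControlledOn a u 0 R K →
      ∃ D, ∀ x y, ‖x‖ ≤ R / 4 → y ∈ Ioo 0 (R / 4) →
        |u (x, y) - u (x, 0) - D * y ^ (1 - a)| ≤ C * K * (y ^ 2 + ‖x‖ * y ^ (1 - a)) := by
  have ha₀ := ha.1
  set c₁ : ℝ := n * (41 * (n + 4) ^ 2) / (2 * R ^ 2)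
  set c₂ : ℝ := 20 * (n + 4) / R ^ 2 * ((n + a) / a * (R / 2) ^ a)
  have hc₁ : 0 ≤ c₁ := by positivity
  have hc₂ : 0 < c₂ := by positivity
  refine ⟨c₁ + c₂, by positivity, fun u K hu => ?_⟩
  obtain ⟨D, hD⟩ := hu.exists_abs_sub_mul_rpow_le ⟨ha.1.le, ha.2⟩
  refine ⟨D, fun x y hx hy => ?_⟩
  have hK := hu.bound_nonneg
  have hy₀ := hy.1
  have hmixed : 0 ≤ ‖x‖ * y ^ (1 - a) := by positivity
  have hvertical : |u (0, y) - u (0, 0) - D * y ^ (1 - a)| ≤ c₁ * K * y ^ 2 :=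
    (hD y hy).trans_eq (by simp only [c₁]; field_simp)
  have htangential : |tangentialDiff x u (0, y) - tangentialDiff x u (0, 0)| ≤
      c₂ * K * (‖x‖ * y ^ (1 - a)) := by
    have h := hu.abs_tangentialDiff_add_normal_sub_le ha rfl hx (y := y)
      ⟨hy₀.le, by linarith [hy.2]⟩
    rw [zero_add] at h
    exact h.trans_eq (by simp only [c₂]; ring)
  have hsplit : u (x, y) - u (x, 0) - D * y ^ (1 - a) =
      (u (0, y) - u (0, 0) - D * y ^ (1 - a)) +
        (tangentialDiff x u (0, y) - tangentialDiff x u (0, 0)) := by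
    simp only [tangentialDiff, Prod.mk_add_mk, zero_add, add_zero]
    ring
  calc |u (x, y) - u (x, 0) - D * y ^ (1 - a)|
      ≤ c₁ * K * y ^ 2 + c₂ * K * (‖x‖ * y ^ (1 - a)) := by
        rw [hsplit]
        exact (abs_add_le _ _).trans (add_le_add hvertical htangential)
    _ ≤ (c₁ + c₂) * K * (y ^ 2 + ‖x‖ * y ^ (1 - a)) := by
        have h₁ := mul_nonneg (mul_nonneg hc₁ hK) hmixed
        have h₂ := mul_nonneg (mul_nonneg hc₂.le hK) (sq_nonneg y)
        linarith

lemma abs_coeff_le {u : En n × ℝ → ℝ} {K C D y : ℝ} (hu : IsControlledOn a u 0 R K)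
    (hy : y ∈ Ioc 0 R)
    (hD : |u (0, y) - u (0, 0) - D * y ^ (1 - a)| ≤ C * K * y ^ 2) :
    |D| ≤ (2 + C * y ^ 2) / y ^ (1 - a) * K := by
  have hy₀ := hy.1
  have hpow : 0 < y ^ (1 - a) := Real.rpow_pos_of_pos hy₀ _
  have hbase := hu.abs_le (0, 0) (mem_upperClosedBall_self le_rfl hu.radius_pos.le)
  have htop := hu.abs_le (0, y)
    (mk_mem_upperClosedBall (X₀ := 0) le_rfl ⟨hy₀.le, by simpa using hy.2⟩)
  have hmul : |D| * y ^ (1 - a) ≤ (2 + C * y ^ 2) * K := by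
    have habs : |D * y ^ (1 - a)| = |D| * y ^ (1 - a) := by rw [abs_mul, abs_of_pos hpow]
    rw [← habs]
    rw [_root_.abs_le] at hbase htop hD ⊢
    constructor <;> linarith
  rwa [div_mul_eq_mul_div, le_div_iff₀ hpow]

lemma abs_sub_sub_mul_rpow_le {u : En n × ℝ → ℝ} {K D d : ℝ} (hu : IsControlledOn a u 0 R K)
    (ha : a ≤ 1) (hD : |D| ≤ d * K) {x : En n} {y : ℝ} (hxy : (x, y) ∈ upperBall 0 R) :
    |u (x, y) - u (x, 0) - D * y ^ (1 - a)| ≤ (2 + d * R ^ (1 - a)) * K := by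
  have hy : 0 < y := hxy.1
  have : 0 ≤ 1 - a := sub_nonneg.2 ha
  have hdK : 0 ≤ d * K := (abs_nonneg D).trans hD
  have hxy' : (x, y) ∈ upperClosedBall 0 R := upperBall_subset_upperClosedBall 0 R hxy
  have hx : (x, 0) ∈ upperClosedBall (0 : En n × ℝ) R := by
    refine ⟨le_rfl, ?_⟩
    simpa using (norm_fst_le_euclNorm ((x, y) - 0)).trans hxy'.2
  have hyR : y ≤ R := (le_abs_self y).trans
    (by simpa using (abs_snd_le_euclNorm ((x, y) - 0)).trans hxy'.2)
  calc |u (x, y) - u (x, 0) - D * y ^ (1 - a)|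
      ≤ |u (x, y)| + |u (x, 0)| + |D| * |y ^ (1 - a)| := by
        rw [← abs_mul]
        exact (abs_sub _ _).trans (add_le_add_left (abs_sub _ _) _)
    _ ≤ K + K + d * K * R ^ (1 - a) := by
        rw [abs_of_nonneg (Real.rpow_nonneg hy.le _)]
        gcongr
        exacts [hu.abs_le _ hxy', hu.abs_le _ hx]
    _ = (2 + d * R ^ (1 - a)) * K := by ring

/-- The interior expansion covers `‖x‖, y < R / 4`; elsewhere `‖x‖² + y² ≥ (R / 4)²` absorbs the
trivial bound. -/
theorem exists_expansion (n : ℕ) (ha : a ∈ Ioo 0 1) (hR : 0 < R) :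
    ∃ C > 0, ∀ (u : En n × ℝ → ℝ) (K : ℝ), IsControlledOn a u 0 R K →
      ∃ D, |D| ≤ C * K ∧ ∀ x y, (x, y) ∈ upperBall 0 R →
        |u (x, y) - u (x, 0) - D * y ^ (1 - a)| ≤
          C * K * (‖x‖ ^ 2 + y ^ 2 + ‖x‖ * y ^ (1 - a)) := by
  obtain ⟨C, hC, hexp⟩ := exists_interior_expansion n ha hR
  set d : ℝ := (2 + C * (R / 8) ^ 2) / (R / 8) ^ (1 - a)
  have hd : 0 < d := by positivity
  set e : ℝ := (2 + d * R ^ (1 - a)) / (R / 4) ^ 2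
  have he : 0 < e := by positivity
  refine ⟨C + d + e, by positivity, fun u K hu => ?_⟩
  have hK := hu.bound_nonneg
  obtain ⟨D, hD⟩ := hexp u K hu
  have hDd : |D| ≤ d * K := hu.abs_coeff_le (C := C) ⟨by positivity, by linarith⟩
    (by simpa using hD 0 (R / 8) (by rw [norm_zero]; positivity) ⟨by positivity, by linarith⟩)
  refine ⟨D, hDd.trans (by gcongr; linarith), fun x y hxy => ?_⟩
  have hy : 0 < y := hxy.1
  have hmixed : 0 ≤ ‖x‖ * y ^ (1 - a) := by positivity
  rcases le_or_gt (R / 4) (max ‖x‖ y) with hfar | hnear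
  · have hsq : (R / 4) ^ 2 ≤ ‖x‖ ^ 2 + y ^ 2 := by
      rcases le_max_iff.1 hfar with h | h <;> nlinarith
    calc |u (x, y) - u (x, 0) - D * y ^ (1 - a)| ≤ e * K * (R / 4) ^ 2 :=
          (hu.abs_sub_sub_mul_rpow_le ha.2.le hDd hxy).trans_eq (by simp only [e]; field_simp)
      _ ≤ (C + d + e) * K * (‖x‖ ^ 2 + y ^ 2 + ‖x‖ * y ^ (1 - a)) := by gcongr <;> linarith
  · rw [max_lt_iff] at hnear
    refine (hD x y hnear.1.le ⟨hy, hnear.2⟩).trans ?_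
    gcongr ?_ * K * ?_
    · linarith
    · linarith [sq_nonneg ‖x‖]

end IsControlledOn

/-! ### Regularity of the trace -/

section Trace

variable {E F : Type*} [NormedAddCommGroup E] [NormedSpace ℝ E] [NormedAddCommGroup F]
  [NormedSpace ℝ F] {f : E → F} {f' : E → E →L[ℝ] F} {s : Set E} {M : ℝ} {x : E}

lemma norm_sub_sub_le_of_lipschitz_fderivWithin (hs : Convex ℝ s)
    (hf : ∀ z ∈ s, HasFDerivWithinAt f (f' z) s z)
    (hf' : ∀ z ∈ s, ∀ z' ∈ s, ‖f' z - f' z'‖ ≤ M * ‖z - z'‖) (hM : 0 ≤ M) {y : E} (hx : x ∈ s)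
    (hy : y ∈ s) : ‖f y - f x - f' x (y - x)‖ ≤ M * ‖y - x‖ ^ 2 := by
  have hseg := hs.segment_subset hx hy
  refine ((convex_segment x y).norm_image_sub_le_of_norm_hasFDerivWithin_le'
    (fun z hz => (hf z (hseg hz)).mono hseg) (fun z hz => ?_) (left_mem_segment ℝ x y)
    (right_mem_segment ℝ x y)).trans_eq (by rw [sq, ← mul_assoc])
  exact (hf' z (hseg hz) x hx).trans (by gcongr; exact norm_sub_le_of_mem_segment hz)

lemma norm_sub_sub_sub_le_of_lipschitz_fderivWithin (hs : Convex ℝ s)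
    (hf : ∀ z ∈ s, HasFDerivWithinAt f (f' z) s z)
    (hf' : ∀ z ∈ s, ∀ z' ∈ s, ‖f' z - f' z'‖ ≤ M * ‖z - z'‖) {h k : E} (hx : x ∈ s)
    (hxh : x + h ∈ s) (hxk : x + k ∈ s) (hxkh : x + k + h ∈ s) :
    ‖f (x + k + h) - f (x + k) - (f (x + h) - f x)‖ ≤ M * ‖h‖ * ‖k‖ := by
  have hseg := hs.segment_subset hx hxk
  have hshift : MapsTo (· + h) (segment ℝ x (x + k)) s := fun z hz => by
    refine hs.segment_subset hxh hxkh ?_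
    change z + h ∈ _
    rw [add_comm x h, add_comm (x + k) h, add_comm z h]
    exact (mem_segment_translate ℝ h).2 hz
  have hderiv (z) (hz : z ∈ segment ℝ x (x + k)) :
      HasFDerivWithinAt (fun z => f (z + h) - f z) (f' (z + h) - f' z) (segment ℝ x (x + k)) z :=
    ((hf _ (hshift hz)).comp z ((hasFDerivWithinAt_id z _).add_const h) hshift).sub
      ((hf z (hseg hz)).mono hseg)
  have hbound (z) (hz : z ∈ segment ℝ x (x + k)) : ‖f' (z + h) - f' z‖ ≤ M * ‖h‖ := by
    simpa using hf' (z + h) (hshift hz) z (hseg hz)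
  simpa using (convex_segment x (x + k)).norm_image_sub_le_of_norm_hasFDerivWithin_le hderiv hbound
    (left_mem_segment ℝ _ _) (right_mem_segment ℝ _ _)

end Trace

lemma flatBall_eq_ball (n : ℕ) (r : ℝ) : flatBall n r = Metric.ball 0 r := by
  ext x
  exact mem_ball_zero_iff.symm

lemma convex_flatBall (n : ℕ) (r : ℝ) : Convex ℝ (flatBall n r) :=
  flatBall_eq_ball n r ▸ convex_ball 0 r

/-! ### The first order expansion -/

section FirstOrderExpansion

variable {a M : ℝ} {u : En n × ℝ → ℝ} {f' : En n → En n →L[ℝ] ℝ}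

lemma HasDataBound.of_hasFDerivWithinAt (hM : 0 ≤ M) (hu : ContinuousOn u (halfBallWithBase n 1))
    (hharm : IsAHarmonicOn a u (halfBall n 1))
    (hint : IntegrableOn (fun X => X.2 ^ a * u X ^ 2) (halfBall n 1))
    (hJ : weightedEnergy a u ≤ M ^ 2)
    (hf : ∀ x ∈ flatBall n 1, HasFDerivWithinAt (fun z => u (z, 0)) (f' x) (flatBall n 1) x)
    (hbound : ∀ x ∈ flatBall n 1, ‖f' x‖ ≤ M)
    (hlip : ∀ x ∈ flatBall n 1, ∀ x' ∈ flatBall n 1, ‖f' x - f' x'‖ ≤ M * ‖x - x'‖) :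
    HasDataBound a u M where
  nonneg := hM
  continuousOn := hu
  isAHarmonicOn := hharm
  integrableOn := hint
  weightedEnergy_le := hJ
  trace_first x h hx hxh := by
    simpa using (convex_flatBall n 1).norm_image_sub_le_of_norm_hasFDerivWithin_le hf hbound hx hxh
  trace_second _ _ _ hx hxh hxk hxkh :=
    norm_sub_sub_sub_le_of_lipschitz_fderivWithin (convex_flatBall n 1) hf hlip hx hxh hxk hxkh

theorem HasDataBound.exists_expansion (n : ℕ) (ha : a ∈ Ioo 0 1) :
    ∃ C > 0, ∀ (u : En n × ℝ → ℝ) (M : ℝ), HasDataBound a u M →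
      ∃ D, |D| ≤ C * M ∧ ∀ X ∈ halfBall n (1 / 2),
        |u X - u (X.1, 0) - D * X.2 ^ (1 - a)| ≤
          C * M * (‖X.1‖ ^ 2 + X.2 ^ 2 + ‖X.1‖ * X.2 ^ (1 - a)) := by
  obtain ⟨c, hc, hsup⟩ := HasDataBound.exists_forall_abs_le n (Ioo_subset_Ico_self ha)
  obtain ⟨C, hC, hexp⟩ := IsControlledOn.exists_expansion n ha (by norm_num : (0 : ℝ) < 3 / 4)
  refine ⟨C * (c + 1), by positivity, fun u M hu => ?_⟩
  have hcontrol : IsControlledOn a u 0 (3 / 4) ((c + 1) * M) :=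
    hu.isControlledOn (by norm_num) le_rfl (by norm_num [euclNorm_zero])
      (le_mul_of_one_le_left hu.nonneg (by linarith))
      fun X hX => (hsup u M hu X hX).trans (by linarith [hu.nonneg])
  obtain ⟨D, hD, happrox⟩ := hexp u _ hcontrol
  refine ⟨D, by rwa [mul_assoc], fun X hX => ?_⟩
  rw [halfBall_eq_upperBall (by norm_num)] at hX
  rw [mul_assoc C]
  exact happrox X.1 X.2 ⟨hX.1, hX.2.trans (by norm_num)⟩

theorem HasDataBound.exists_first_order_expansion (n : ℕ) (ha : a ∈ Ioo 0 1) :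
    ∃ C > 0, ∀ (u : En n × ℝ → ℝ) (M : ℝ) (l : En n →L[ℝ] ℝ), HasDataBound a u M →
      (∀ x ∈ flatBall n 1, |u (x, 0) - u (0, 0) - l x| ≤ M * ‖x‖ ^ 2) →
      ∃ D, |D| ≤ C * M ∧ ∀ X ∈ halfBall n (1 / 2),
        |u X - u (0, 0) - l X.1 - D * X.2 ^ (1 - a)| ≤
          C * M * (‖X.1‖ ^ 2 + X.2 ^ 2 + ‖X.1‖ * X.2 ^ (1 - a)) := by
  obtain ⟨C, hC, hexp⟩ := HasDataBound.exists_expansion n ha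
  refine ⟨C + 1, by positivity, fun u M l hu hl => ?_⟩
  have hM := hu.nonneg
  obtain ⟨D, hD, happrox⟩ := hexp u M hu
  refine ⟨D, hD.trans (by gcongr; linarith), fun X hX => ?_⟩
  obtain ⟨hX₂, hXnorm⟩ := (mem_halfBall (by norm_num)).1 hX
  have htrace := hl X.1 ((norm_fst_le_euclNorm X).trans_lt (hXnorm.trans (by norm_num)))
  have hy : 0 ≤ X.2 ^ 2 + ‖X.1‖ * X.2 ^ (1 - a) := by positivity
  calc |u X - u (0, 0) - l X.1 - D * X.2 ^ (1 - a)|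
      = |(u X - u (X.1, 0) - D * X.2 ^ (1 - a)) + (u (X.1, 0) - u (0, 0) - l X.1)| := by ring_nf
    _ ≤ C * M * (‖X.1‖ ^ 2 + X.2 ^ 2 + ‖X.1‖ * X.2 ^ (1 - a)) + M * ‖X.1‖ ^ 2 :=
        (abs_add_le _ _).trans (add_le_add (happrox X hX) htrace)
    _ ≤ (C + 1) * M * (‖X.1‖ ^ 2 + X.2 ^ 2 + ‖X.1‖ * X.2 ^ (1 - a)) := by
        linarith [mul_nonneg hM hy]

end FirstOrderExpansion

lemma zero_mem_flatBall {r : ℝ} (hr : 0 < r) : (0 : En n) ∈ flatBall n r :=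
  flatBall_eq_ball n r ▸ Metric.mem_ball_self hr

lemma nonneg_of_forall_norm_sub_le_mul {F : Type*} [NormedAddCommGroup F] (hn : 1 ≤ n)
    {g : En n → F} {M : ℝ}
    (hg : ∀ x ∈ flatBall n 1, ∀ x' ∈ flatBall n 1, ‖g x - g x'‖ ≤ M * ‖x - x'‖) : 0 ≤ M := by
  have : Nontrivial (En n) :=
    Module.nontrivial_of_finrank_pos (R := ℝ) (by rwa [finrank_euclideanSpace_fin])
  obtain ⟨x, hx⟩ := exists_norm_eq (En n) (by norm_num : (0 : ℝ) ≤ 1 / 2)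
  have hM := (norm_nonneg _).trans (hg x (by norm_num [flatBall, hx]) 0
    (zero_mem_flatBall one_pos))
  rw [sub_zero, hx] at hM
  linarith

theorem first_order_expansion_general (n : ℕ) (hn : 1 ≤ n) (s : ℝ)
    (hs : s ∈ Ioo (0 : ℝ) (1 / 2)) :
    ∃ C > 0, ∀ (u : En n × ℝ → ℝ) (f' : En n → En n →L[ℝ] ℝ) (M1 M2 J : ℝ),
      ContinuousOn u (halfBallWithBase n 1) →
      IsAHarmonicOn (1 - 2 * s) u (halfBall n 1) →
      IntegrableOn (fun X => X.2 ^ (1 - 2 * s) * u X ^ 2) (halfBall n 1) →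
      (∀ x ∈ flatBall n 1, HasFDerivWithinAt (fun z => u (z, 0)) (f' x) (flatBall n 1) x) →
      (∀ x ∈ flatBall n 1, ‖f' x‖ ≤ M1) →
      (∀ x ∈ flatBall n 1, ∀ x' ∈ flatBall n 1, ‖f' x - f' x'‖ ≤ M2 * ‖x - x'‖) →
      0 ≤ J →
      weightedEnergy (1 - 2 * s) u ≤ J ^ 2 →
      ∃ D, |D| ≤ C * (M1 + M2 + J) ∧ ∀ X ∈ halfBall n (1 / 2),
        |u X - u (0, 0) - f' 0 X.1 - D * X.2 ^ (2 * s)| ≤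
          C * (M1 + M2 + J) * (‖X.1‖ ^ 2 + X.2 ^ 2 + ‖X.1‖ * X.2 ^ (2 * s)) := by
  obtain ⟨C, hC, hexp⟩ := HasDataBound.exists_first_order_expansion n (a := 1 - 2 * s)
    ⟨by linarith [hs.2], by linarith [hs.1]⟩
  rw [sub_sub_cancel] at hexp
  refine ⟨C, hC, fun u f' M1 M2 J hu hharm hint hf hM1 hM2 hJ hE => ?_⟩
  have h0 : (0 : En n) ∈ flatBall n 1 := zero_mem_flatBall one_pos
  have hM1₀ : 0 ≤ M1 := (norm_nonneg _).trans (hM1 0 h0)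
  have hM2₀ : 0 ≤ M2 := nonneg_of_forall_norm_sub_le_mul hn hM2
  set M := M1 + M2 + J
  have hM : 0 ≤ M := by positivity
  have hlip : ∀ x ∈ flatBall n 1, ∀ x' ∈ flatBall n 1, ‖f' x - f' x'‖ ≤ M * ‖x - x'‖ :=
    fun x hx x' hx' => (hM2 x hx x' hx').trans (by gcongr; linarith)
  have hdata : HasDataBound (1 - 2 * s) u M := .of_hasFDerivWithinAt hM hu hharm hint
    (hE.trans (by gcongr; linarith)) hf (fun x hx => (hM1 x hx).trans (by linarith)) hlip
  refine hexp u M (f' 0) hdata fun x hx => ?_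
  simpa using norm_sub_sub_le_of_lipschitz_fderivWithin (convex_flatBall n 1) hf hlip hM h0 hx

/-- **Corollary 2.4 (first order expansion with normal term).** If `u` is `a`-harmonic in
`B_1^+`, lies in `L²(B_1^+, y^a)`, and its trace `f(x) = u(x,0)` is `C^{1,1}` on `B_1^0`,
then there is `D ∈ ℝ` with
`|u(x,y) - f(0) - ∇f(0)·x - D y^{1-a}| ≤ C (|x|² + y² + |x| y^{1-a})` in `B_{1/2}^+`,
where `C` and `|D|` are controlled in terms of `n`, `a`, the `C^{1,1}` norm of `f` and the
weighted `L²` norm of `u` (here `a = 1-2s`, `1-a = 2s`). -/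
theorem first_order_expansion (n : ℕ) (hn : 1 ≤ n) (s : ℝ) (hs : s ∈ Ioo (0 : ℝ) (1/2)) :
    ∃ C > 0, ∀ (u : En n × ℝ → ℝ) (f' : En n → (En n →L[ℝ] ℝ)) (M0 M1 M2 J : ℝ),
      ContinuousOn u (halfBallWithBase n 1) →
      IsAHarmonicOn (1 - 2*s) u (halfBall n 1) →
      IntegrableOn (fun p : En n × ℝ => p.2 ^ (1 - 2*s) * (u p)^2) (halfBall n 1) volume →
      (∀ x ∈ flatBall n 1, HasFDerivWithinAt (fun z => u (z, 0)) (f' x) (flatBall n 1) x) →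
      (∀ x ∈ flatBall n 1, |u (x, 0)| ≤ M0) →
      (∀ x ∈ flatBall n 1, ‖f' x‖ ≤ M1) →
      (∀ x ∈ flatBall n 1, ∀ x' ∈ flatBall n 1, ‖f' x - f' x'‖ ≤ M2 * ‖x - x'‖) →
      0 ≤ J →
      (∫ p in halfBall n 1, p.2 ^ (1 - 2*s) * (u p)^2) ≤ J^2 →
      ∃ D : ℝ, |D| ≤ C * (M0 + M1 + M2 + J) ∧
        ∀ p ∈ halfBall n (1/2),
          |u p - u (0, 0) - f' 0 p.1 - D * p.2 ^ (2*s)| ≤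
            C * (M0 + M1 + M2 + J) * (‖p.1‖^2 + p.2^2 + ‖p.1‖ * p.2 ^ (2*s)) := by
  obtain ⟨C, hC, hexp⟩ := first_order_expansion_general n hn s hs
  refine ⟨C, hC, fun u f' M0 M1 M2 J hu hharm hint hf hM0 hM1 hM2 hJ hE => ?_⟩
  obtain ⟨D, hD, happrox⟩ := hexp u f' M1 M2 J hu hharm hint hf hM1 hM2 hJ hE
  have hle : M1 + M2 + J ≤ M0 + M1 + M2 + J := by
    linarith [(abs_nonneg _).trans (hM0 0 (zero_mem_flatBall one_pos))]
  refine ⟨D, hD.trans (by gcongr), fun p hp => (happrox p hp).trans ?_⟩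
  have := hp.2
  gcongr

end
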